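/- arXiv:1908.03666 — 3 statements merged into one kernel-verified Lean document; each statement's English description precedes it below -/
import Mathlib

section
/- Let 0 < H < 1/2, 1/2 < α < 1 with α + H > 1, and let λ > 0, t > 0. Set φ(s) = (t-s)^{α-1} E_{α,α}(-λ (t-s)^α) for 0 < s < t. Then there exists a constant C > 0 (depending only on α and H, in particular independent of λ and t) such that ∫_0^t [ K_H(t,τ) φ(τ) + ∫_τ^t (φ(u) - φ(τ)) ∂K_H(u,τ)/∂u du ]² dτ ≤ C t^{2α+2H-2}. -/
open Real intervalIntegral

/-- The two-parameter Mittag-Leffler function (real arguments),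
with the convention `1/Γ = 0` at the poles of `Γ` (as in Mathlib's `Real.Gamma`). -/
noncomputable def mittagLeffler (α β x : ℝ) : ℝ :=
  ∑' k : ℕ, x ^ k / Real.Gamma ((k : ℝ) * α + β)

/-- The real Beta function `B(a,b) = Γ(a)Γ(b)/Γ(a+b)`. -/
noncomputable def realBeta (a b : ℝ) : ℝ :=
  Real.Gamma a * Real.Gamma b / Real.Gamma (a + b)

/-- The normalizing constant of the fBm kernel for `0 < H < 1/2`. -/
noncomputable def cH (H : ℝ) : ℝ :=
  ((2*H) / ((1 - 2*H) * realBeta (1 - 2*H) (H + 1/2))) ^ (1/2 : ℝ)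

/-- The fBm square integrable kernel `K_H(t,s)` for `0 < H < 1/2`. -/
noncomputable def KH (H t s : ℝ) : ℝ :=
  cH H * ((t/s) ^ (H - 1/2) * (t - s) ^ (H - 1/2)
    - (H - 1/2) * s ^ (1/2 - H) * ∫ u in s..t, u ^ (H - 3/2) * (u - s) ^ (H - 1/2))

/-- The partial derivative `∂K_H(u,s)/∂u` of the fBm kernel in its first variable. -/
noncomputable def dKH (H u s : ℝ) : ℝ :=
  cH H * (u/s) ^ (H - 1/2) * (u - s) ^ (H - 3/2)

/-!
Let `0 < α ≤ 1` and `G = ((1 - X) ^ α + ε)⁻¹`. Only the constant coefficient of `(1 - X) ^ α` is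
positive, so `G` has nonnegative coefficients, and the resolvent identity then gives
`ε ^ m G ^ (m + 1) ≤ (1 - X) ^ (-α)` coefficientwise. Expanding `G ^ (m + 1)` in powers of `ε`,
taking the `n`-th coefficient at `ε = x n ^ (-α)` and letting `n → ∞`, Euler's limit formula for
`Γ` turns this into `0 ≤ x ^ m E_{α,α(m+1)}^{m+1}(-x) ≤ 1 / Γ(α)` for Prabhakar's function. With
`m = 0, 1` the kernel `f(v) = v ^ (α - 1) E_{α,α}(-λ v ^ α)` obeys `|f(v)| ≤ v ^ (α - 1) / Γ(α)` and
`|f'(v)| ≤ v ^ (α - 2) / Γ(α)` uniformly in `λ`, hence by interpolation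
`|f(v) - f(r)| ≤ 2 v ^ (α - 3/2) (r - v) ^ (1/2) / Γ(α)` for `v ≤ r`. The increment absorbs the
singularity of `∂K_H(u, τ)/∂u` at `u = τ`, and all that remains are Beta integrals.
-/

section Multichoose

open Ring

lemma multichoose_succ (s : ℝ) (n : ℕ) :
    multichoose s (n + 1) = multichoose s n * ((s + n) / (n + 1)) := by
  have hn := factorial_nsmul_multichoose_eq_ascPochhammer s n
  have hn' := factorial_nsmul_multichoose_eq_ascPochhammer s (n + 1)
  rw [Polynomial.ascPochhammer_smeval_eq_eval, nsmul_eq_mul] at hn hn'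
  rw [ascPochhammer_succ_eval, ← hn, Nat.factorial_succ] at hn'
  push_cast at hn'
  have : (n.factorial : ℝ) ≠ 0 := by positivity
  field_simp at hn' ⊢
  linear_combination hn'

lemma multichoose_nonneg {s : ℝ} (hs : 0 ≤ s) (n : ℕ) : 0 ≤ multichoose s n := by
  induction n with
  | zero => simp
  | succ n ih =>
    rw [multichoose_succ]
    positivity

lemma multichoose_pos {s : ℝ} (hs : 0 < s) (n : ℕ) : 0 < multichoose s n := by
  induction n with
  | zero => simp
  | succ n ih =>
    rw [multichoose_succ]
    positivity

lemma multichoose_le_pow {s : ℝ} (hs : 0 ≤ s) (n : ℕ) : multichoose s n ≤ (1 + s) ^ n := by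
  induction n with
  | zero => simp
  | succ n ih =>
    have hratio : (s + n) / (n + 1) ≤ 1 + s := by
      rw [div_le_iff₀ (by positivity)]
      nlinarith [mul_nonneg hs n.cast_nonneg]
    rw [multichoose_succ, pow_succ]
    gcongr

lemma multichoose_neg_succ_nonpos {a : ℝ} (ha0 : 0 ≤ a) (ha1 : a ≤ 1) (n : ℕ) :
    multichoose (-a) (n + 1) ≤ 0 := by
  induction n with
  | zero => simpa using ha0
  | succ n ih =>
    rw [multichoose_succ]
    refine mul_nonpos_of_nonpos_of_nonneg ih (div_nonneg ?_ (by positivity))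
    push_cast
    linarith [n.cast_nonneg (α := ℝ)]

lemma multichoose_mul_factorial (s : ℝ) (n : ℕ) :
    multichoose s n * n.factorial = ∏ j ∈ Finset.range n, (s + j) := by
  induction n with
  | zero => simp
  | succ n ih =>
    rw [Finset.prod_range_succ, ← ih, multichoose_succ, Nat.factorial_succ]
    push_cast
    field_simp

end Multichoose

section NegBinomialSeries

open PowerSeries Ring

/-- The power series `(1 - X) ^ (-s)` with real exponent, so that `s ↦ negBinomialSeries s` turns
sums into products; its coefficients are the numbers `Ring.multichoose s n`. -/
noncomputable def negBinomialSeries (s : ℝ) : PowerSeries ℝ :=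
  rescale (-1) (binomialSeries ℝ (-s))

lemma coeff_negBinomialSeries (s : ℝ) (n : ℕ) :
    coeff n (negBinomialSeries s) = multichoose s n := by
  rw [negBinomialSeries, coeff_rescale, binomialSeries_coeff, choose_neg', ←
    Int.cast_negOnePow_natCast, Units.smul_def, zsmul_eq_mul, smul_eq_mul, mul_one, ← mul_assoc,
    ← Int.cast_mul, ← Units.val_mul, Int.units_mul_self, Units.val_one, Int.cast_one, one_mul]

lemma negBinomialSeries_zero : negBinomialSeries 0 = 1 := by
  simp [negBinomialSeries]

lemma negBinomialSeries_add (s t : ℝ) :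
    negBinomialSeries (s + t) = negBinomialSeries s * negBinomialSeries t := by
  rw [negBinomialSeries, neg_add, binomialSeries_add, map_mul, negBinomialSeries,
    negBinomialSeries]

lemma negBinomialSeries_pow (s : ℝ) (k : ℕ) :
    negBinomialSeries s ^ k = negBinomialSeries (s * k) := by
  induction k with
  | zero => simp [negBinomialSeries_zero]
  | succ k ih => rw [pow_succ, ih, ← negBinomialSeries_add, Nat.cast_succ, mul_add_one]

lemma negBinomialSeries_mul_neg (s : ℝ) : negBinomialSeries (-s) * negBinomialSeries s = 1 := by
  rw [← negBinomialSeries_add, neg_add_cancel, negBinomialSeries_zero]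

end NegBinomialSeries

section CoeffNonneg

open PowerSeries

/-- Nonnegativity of all coefficients of a power series: the cone of the coefficientwise order. -/
def CoeffNonneg {R : Type*} [Semiring R] [PartialOrder R] (f : PowerSeries R) : Prop :=
  ∀ n, 0 ≤ coeff n f

section Semiring

variable {R : Type*} [Semiring R] [PartialOrder R] {f g : PowerSeries R}

lemma coeffNonneg_C {c : R} (hc : 0 ≤ c) : CoeffNonneg (C c) := fun n ↦ by
  rw [coeff_C]
  split_ifs <;> simp [hc]

variable [IsOrderedRing R]

lemma coeffNonneg_one : CoeffNonneg (1 : PowerSeries R) :=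
  coeffNonneg_C zero_le_one

lemma CoeffNonneg.add (hf : CoeffNonneg f) (hg : CoeffNonneg g) : CoeffNonneg (f + g) := fun n ↦ by
  rw [map_add]
  exact add_nonneg (hf n) (hg n)

lemma CoeffNonneg.mul (hf : CoeffNonneg f) (hg : CoeffNonneg g) : CoeffNonneg (f * g) := fun n ↦ by
  rw [coeff_mul]
  exact Finset.sum_nonneg fun ij _ ↦ mul_nonneg (hf ij.1) (hg ij.2)

lemma CoeffNonneg.pow (hf : CoeffNonneg f) (m : ℕ) : CoeffNonneg (f ^ m) := by
  induction m with
  | zero => simpa using coeffNonneg_one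
  | succ m ih => simpa only [pow_succ] using ih.mul hf

end Semiring

lemma CoeffNonneg.of_mul_left {R : Type*} [Ring R] [LinearOrder R] [IsStrictOrderedRing R]
    {f g : PowerSeries R} (hf0 : 0 < coeff 0 f) (hf : ∀ n, coeff (n + 1) f ≤ 0)
    (hfg : CoeffNonneg (f * g)) : CoeffNonneg g := fun n ↦ by
  induction n using Nat.strong_induction_on with
  | _ n ih =>
    have hsum := hfg n
    rw [coeff_mul, Finset.Nat.sum_antidiagonal_eq_sum_range_succ (fun i j ↦ coeff i f * coeff j g),
      Finset.sum_range_succ', Nat.sub_zero] at hsum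
    have htail : ∑ k ∈ Finset.range n, coeff (k + 1) f * coeff (n - (k + 1)) g ≤ 0 :=
      Finset.sum_nonpos fun k hk ↦ mul_nonpos_of_nonpos_of_nonneg (hf k)
        (ih _ (by have := Finset.mem_range.1 hk; omega))
    exact nonneg_of_mul_nonneg_right (hsum.trans (add_le_of_nonpos_left htail)) hf0

end CoeffNonneg

section Resolvent

open PowerSeries

/-- The discrete resolvent `((1 - X) ^ a + ε)⁻¹`. -/
noncomputable def resolventSeries (a ε : ℝ) : PowerSeries ℝ :=
  (negBinomialSeries (-a) + C ε)⁻¹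

variable {a ε : ℝ}

lemma mul_resolventSeries (a : ℝ) (hε : 0 ≤ ε) :
    (negBinomialSeries (-a) + C ε) * resolventSeries a ε = 1 := by
  refine PowerSeries.mul_inv_cancel _ ?_
  rw [map_add, constantCoeff_C, ← coeff_zero_eq_constantCoeff_apply, coeff_negBinomialSeries,
    Ring.multichoose_zero_right]
  positivity

lemma coeffNonneg_resolventSeries (ha0 : 0 ≤ a) (ha1 : a ≤ 1) (hε : 0 ≤ ε) :
    CoeffNonneg (resolventSeries a ε) := by
  refine CoeffNonneg.of_mul_left (f := negBinomialSeries (-a) + C ε) ?_ (fun n ↦ ?_) ?_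
  · rw [map_add, coeff_negBinomialSeries, Ring.multichoose_zero_right, coeff_zero_C]
    positivity
  · rw [map_add, coeff_negBinomialSeries, coeff_succ_C, add_zero]
    exact multichoose_neg_succ_nonpos ha0 ha1 n
  · rw [mul_resolventSeries a hε]
    exact coeffNonneg_one

/-- The resolvent identity `(1 - X) ^ (-a) = G + ε G (1 - X) ^ (-a)` bounds both summands on the
right, and multiplying by `ε G` raises the power. -/
lemma coeffNonneg_negBinomialSeries_sub_resolventSeries_pow (ha0 : 0 ≤ a) (ha1 : a ≤ 1)
    (hε : 0 ≤ ε) (m : ℕ) :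
    CoeffNonneg (negBinomialSeries a - C ε ^ m * resolventSeries a ε ^ (m + 1)) := by
  have hB : CoeffNonneg (negBinomialSeries a) := fun n ↦ by
    rw [coeff_negBinomialSeries]
    exact multichoose_nonneg ha0 n
  have hG := coeffNonneg_resolventSeries ha0 ha1 hε
  have hresolvent : negBinomialSeries a =
      resolventSeries a ε + C ε * resolventSeries a ε * negBinomialSeries a := by
    linear_combination (-negBinomialSeries a) * mul_resolventSeries a hε +
      resolventSeries a ε * negBinomialSeries_mul_neg a
  have hεG := (coeffNonneg_C hε).mul hG
  induction m with
  | zero =>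
    convert hεG.mul hB using 1
    linear_combination hresolvent
  | succ m ih =>
    convert hG.add (hεG.mul ih) using 1
    linear_combination hresolvent

end Resolvent

section GeometricPowers

variable {R : Type*} [CommRing R] [TopologicalSpace R] [IsTopologicalRing R] [T2Space R]

lemma tsum_choose_mul_pow_mul_one_sub_pow {x : R}
    (hx : ∀ m : ℕ, Summable fun k : ℕ ↦ ((k + m).choose m : R) * x ^ k) (m : ℕ) :
    (∑' k : ℕ, ((k + m).choose m : R) * x ^ k) * (1 - x) ^ (m + 1) = 1 := by
  induction m with
  | zero =>
    have h0 := hx 0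
    simp only [Nat.choose_zero_right, Nat.cast_one, one_mul] at h0
    simpa using h0.tsum_pow_mul_one_sub
  | succ m ih =>
    have hpascal : ∀ k : ℕ, ((k + 1 + (m + 1)).choose (m + 1) : R) * x ^ (k + 1) =
        ((k + 1 + m).choose m : R) * x ^ (k + 1) +
          ((k + (m + 1)).choose (m + 1) : R) * x ^ k * x := by
      intro k
      rw [show k + 1 + (m + 1) = k + (m + 1) + 1 by ring, Nat.choose_succ_succ,
        show k + (m + 1) = k + 1 + m by ring]
      push_cast
      ring
    have hstep : (∑' k : ℕ, ((k + (m + 1)).choose (m + 1) : R) * x ^ k) * (1 - x) =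
        ∑' k : ℕ, ((k + m).choose m : R) * x ^ k := by
      have hsplit := (hx (m + 1)).tsum_eq_zero_add
      simp_rw [hpascal] at hsplit
      rw [((summable_nat_add_iff 1).2 (hx m)).tsum_add ((hx (m + 1)).mul_right x),
        (hx (m + 1)).tsum_mul_right] at hsplit
      rw [(hx m).tsum_eq_zero_add]
      simp only [Nat.zero_add, Nat.choose_self] at hsplit ⊢
      linear_combination hsplit
    rw [pow_succ', ← mul_assoc, hstep, ih]

end GeometricPowers

section ResolventExpansion

open PowerSeries Ring

lemma summable_choose_mul_pow_mul_geometric {α β ρ : ℝ} (hα : 0 ≤ α) (hβ : 0 ≤ β) (hρ0 : 0 < ρ)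
    (hρ1 : ρ < 1) (m p : ℕ) :
    Summable fun k : ℕ ↦ ((k + m).choose m : ℝ) * (1 + (k * α + β)) ^ p * ρ ^ k := by
  have hgeom : Summable fun k : ℕ ↦ ((k + (m + 1) : ℕ) : ℝ) ^ (m + p) * ρ ^ k := by
    have h := (summable_nat_add_iff (m + 1)).2 (summable_pow_mul_geometric_of_norm_lt_one (m + p)
      (r := ρ) (by rwa [Real.norm_of_nonneg hρ0.le]))
    refine (h.mul_right (ρ ^ (m + 1))⁻¹).congr fun k ↦ ?_
    rw [pow_add ρ k]
    field_simp
  refine Summable.of_nonneg_of_le (fun k ↦ by positivity) (fun k ↦ ?_)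
    (hgeom.mul_left ((1 + α + β) ^ p))
  have hchoose : ((k + m).choose m : ℝ) ≤ ((k + (m + 1) : ℕ) : ℝ) ^ m := by
    exact_mod_cast (Nat.choose_le_pow _ _).trans (by gcongr; omega)
  have hlinear : 1 + (k * α + β) ≤ (1 + α + β) * ((k + (m + 1) : ℕ) : ℝ) := by
    push_cast
    nlinarith [mul_nonneg hα m.cast_nonneg, mul_nonneg hβ m.cast_nonneg,
      mul_nonneg hβ k.cast_nonneg, k.cast_nonneg (α := ℝ), m.cast_nonneg (α := ℝ)]
  calc ((k + m).choose m : ℝ) * (1 + (k * α + β)) ^ p * ρ ^ k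
      ≤ ((k + (m + 1) : ℕ) : ℝ) ^ m * ((1 + α + β) * ((k + (m + 1) : ℕ) : ℝ)) ^ p * ρ ^ k := by
        gcongr
    _ = (1 + α + β) ^ p * (((k + (m + 1) : ℕ) : ℝ) ^ (m + p) * ρ ^ k) := by
        rw [mul_pow, pow_add]
        ring

open scoped PowerSeries.WithPiTopology

variable {a ε : ℝ}

lemma summable_choose_mul_pow_negBinomialSeries (ha : 0 ≤ a) (hε0 : 0 < ε) (hε1 : ε < 1) (m : ℕ) :
    Summable fun k : ℕ ↦
      ((k + m).choose m : PowerSeries ℝ) * (C (-ε) * negBinomialSeries a) ^ k := by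
  refine (WithPiTopology.summable_iff_summable_coeff ℝ).2 fun d ↦ ?_
  refine .of_norm_bounded
    (summable_choose_mul_pow_mul_geometric ha le_rfl hε0 hε1 m d) fun k ↦ ?_
  have hcoeff : coeff d (((k + m).choose m : PowerSeries ℝ) * (C (-ε) * negBinomialSeries a) ^ k) =
      (k + m).choose m * multichoose (a * k) d * (-ε) ^ k := by
    rw [mul_pow, negBinomialSeries_pow, ← map_pow, ← map_natCast (C (R := ℝ)), coeff_C_mul,
      coeff_C_mul, coeff_negBinomialSeries]
    ring
  have hnonneg := multichoose_nonneg (mul_nonneg ha k.cast_nonneg) d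
  have hle := multichoose_le_pow (mul_nonneg ha k.cast_nonneg) d
  rw [hcoeff, norm_mul, norm_mul, norm_pow, norm_neg, Real.norm_of_nonneg hε0.le,
    Real.norm_of_nonneg hnonneg, Real.norm_natCast, add_zero, mul_comm (k : ℝ) a]
  gcongr

lemma hasSum_coeff_resolventSeries_pow (ha : 0 ≤ a) (hε0 : 0 < ε) (hε1 : ε < 1) (m n : ℕ) :
    HasSum (fun k : ℕ ↦ (k + m).choose m * (-ε) ^ k * multichoose (k * a + a * (m + 1)) n)
      (coeff n (resolventSeries a ε ^ (m + 1))) := by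
  set x := C (-ε) * negBinomialSeries a with hx
  have hsummable := summable_choose_mul_pow_negBinomialSeries ha hε0 hε1
  have hexpansion : resolventSeries a ε ^ (m + 1) =
      negBinomialSeries a ^ (m + 1) * ∑' k : ℕ, ((k + m).choose m : PowerSeries ℝ) * x ^ k := by
    have hfactor : (negBinomialSeries (-a) + C ε) * negBinomialSeries a = 1 - x := by
      rw [hx, map_neg]
      linear_combination negBinomialSeries_mul_neg a
    calc resolventSeries a ε ^ (m + 1)
        = resolventSeries a ε ^ (m + 1) *
            ((∑' k : ℕ, ((k + m).choose m : PowerSeries ℝ) * x ^ k) *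
              ((negBinomialSeries (-a) + C ε) * negBinomialSeries a) ^ (m + 1)) := by
          rw [hfactor, tsum_choose_mul_pow_mul_one_sub_pow hsummable, mul_one]
      _ = ((negBinomialSeries (-a) + C ε) * resolventSeries a ε) ^ (m + 1) *
            (negBinomialSeries a ^ (m + 1) *
              ∑' k : ℕ, ((k + m).choose m : PowerSeries ℝ) * x ^ k) := by
          rw [mul_pow, mul_pow]
          ring
      _ = _ := by rw [mul_resolventSeries a hε0.le, one_pow, one_mul]
  have hterm (k : ℕ) : coeff n (negBinomialSeries a ^ (m + 1) *
      (((k + m).choose m : PowerSeries ℝ) * x ^ k)) =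
      (k + m).choose m * (-ε) ^ k * multichoose (k * a + a * (m + 1)) n := by
    rw [hx, mul_pow, negBinomialSeries_pow, negBinomialSeries_pow, ← map_pow,
      ← map_natCast (C (R := ℝ)), mul_left_comm, coeff_C_mul, mul_left_comm, coeff_C_mul,
      ← negBinomialSeries_add, coeff_negBinomialSeries, mul_assoc, mul_comm a k, Nat.cast_succ,
      add_comm (a * _)]
  rw [hexpansion, ← funext hterm]
  exact (WithPiTopology.hasSum_iff_hasSum_coeff ℝ).1
    ((hsummable m).hasSum.mul_left (negBinomialSeries a ^ (m + 1))) n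

end ResolventExpansion

section GammaSeq

open Ring Filter Topology

variable {s : ℝ}

lemma gammaSeq_eq_rpow_div_multichoose (s : ℝ) (n : ℕ) :
    GammaSeq s n = (n : ℝ) ^ s / (multichoose s n * (s + n)) := by
  rw [GammaSeq, Finset.prod_range_succ, ← multichoose_mul_factorial]
  have : (n.factorial : ℝ) ≠ 0 := by positivity
  field_simp

lemma gammaSeq_pos (hs : 0 < s) {n : ℕ} (hn : n ≠ 0) : 0 < GammaSeq s n := by
  rw [gammaSeq_eq_rpow_div_multichoose]
  have := multichoose_pos hs n
  positivity

lemma gammaSeq_le_succ (hs : 0 < s) {n : ℕ} (hn : n ≠ 0) : GammaSeq s n ≤ GammaSeq s (n + 1) := by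
  have hn0 : (0 : ℝ) < n := by positivity
  have hM := multichoose_pos hs n
  have hbernoulli : (s + (n + 1)) / (n + 1) * (n : ℝ) ^ s ≤ ((n : ℝ) + 1) ^ s := by
    rw [← le_div_iff₀ (by positivity), ← Real.div_rpow (by positivity) hn0.le]
    have hlog : 1 / ((n : ℝ) + 1) ≤ Real.log ((n + 1) / n) := by
      refine le_trans (le_of_eq ?_) (Real.one_sub_inv_le_log_of_pos (by positivity))
      field_simp
      ring
    calc (s + (n + 1)) / (n + 1) = 1 / ((n : ℝ) + 1) * s + 1 := by field_simp
      _ ≤ Real.exp (1 / ((n : ℝ) + 1) * s) := Real.add_one_le_exp _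
      _ ≤ Real.exp (Real.log ((n + 1) / n) * s) := by gcongr
      _ = ((n + 1) / n : ℝ) ^ s := (Real.rpow_def_of_pos (by positivity) s).symm
  rw [gammaSeq_eq_rpow_div_multichoose, gammaSeq_eq_rpow_div_multichoose, multichoose_succ,
    div_le_div_iff₀ (by positivity) (by positivity)]
  push_cast
  calc (n : ℝ) ^ s * (multichoose s n * ((s + n) / (n + 1)) * (s + (n + 1)))
      = (s + (n + 1)) / (n + 1) * (n : ℝ) ^ s * (multichoose s n * (s + n)) := by ring
    _ ≤ (n + 1 : ℝ) ^ s * (multichoose s n * (s + n)) := by gcongr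

lemma gammaSeq_mono (hs : 0 < s) {M n : ℕ} (hM : M ≠ 0) (hMn : M ≤ n) :
    GammaSeq s M ≤ GammaSeq s n := by
  induction n, hMn using Nat.le_induction with
  | base => exact le_rfl
  | succ n hn ih => exact ih.trans (gammaSeq_le_succ hs (by omega))

lemma gammaSeq_le_gamma (hs : 0 < s) {M : ℕ} (hM : M ≠ 0) : GammaSeq s M ≤ Real.Gamma s :=
  ge_of_tendsto (GammaSeq_tendsto_Gamma s)
    (eventually_atTop.2 ⟨M, fun _ hMn ↦ gammaSeq_mono hs hM hMn⟩)

lemma inv_gammaSeq_le (hs : 0 < s) {M : ℕ} (hM : M ≠ 0) :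
    (GammaSeq s M)⁻¹ ≤ M * (1 + s) ^ (M + 1) * (M : ℝ) ^ (-s) := by
  have hM1 : (1 : ℝ) ≤ M := by exact_mod_cast Nat.one_le_iff_ne_zero.2 hM
  rw [gammaSeq_eq_rpow_div_multichoose, inv_div, div_eq_mul_inv, Real.rpow_neg (by positivity)]
  refine mul_le_mul_of_nonneg_right ?_ (by positivity)
  calc multichoose s M * (s + M) ≤ (1 + s) ^ M * (M * (1 + s)) := by
        gcongr
        · exact multichoose_le_pow hs.le M
        · nlinarith
    _ = M * (1 + s) ^ (M + 1) := by ring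

lemma rpow_one_sub_mul_multichoose (hs : 0 < s) {n : ℕ} (hn : n ≠ 0) :
    (n : ℝ) ^ (1 - s) * multichoose s n = n / (n + s) * (GammaSeq s n)⁻¹ := by
  have hn0 : (0 : ℝ) < n := by positivity
  rw [gammaSeq_eq_rpow_div_multichoose, Real.rpow_sub hn0, Real.rpow_one]
  field_simp
  ring

lemma rpow_one_sub_mul_multichoose_le (hs : 0 < s) {M n : ℕ} (hM : M ≠ 0) (hMn : M ≤ n) :
    (n : ℝ) ^ (1 - s) * multichoose s n ≤ (GammaSeq s M)⁻¹ := by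
  have hn : n ≠ 0 := by omega
  have hMpos := gammaSeq_pos hs hM
  have hnpos := gammaSeq_pos hs hn
  rw [rpow_one_sub_mul_multichoose hs hn]
  calc n / (n + s) * (GammaSeq s n)⁻¹ ≤ 1 * (GammaSeq s M)⁻¹ := by
        gcongr
        · exact div_le_one_of_le₀ (by linarith) (by positivity)
        · exact gammaSeq_mono hs hM hMn
    _ = (GammaSeq s M)⁻¹ := one_mul _

lemma tendsto_rpow_one_sub_mul_multichoose (hs : 0 < s) :
    Tendsto (fun n : ℕ ↦ (n : ℝ) ^ (1 - s) * multichoose s n) atTop (𝓝 (Real.Gamma s)⁻¹) := by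
  have h := (tendsto_natCast_div_add_atTop s).mul
    ((GammaSeq_tendsto_Gamma s).inv₀ (Gamma_pos_of_pos hs).ne')
  rw [one_mul] at h
  refine h.congr' ?_
  filter_upwards [eventually_ne_atTop 0] with n hn
  exact (rpow_one_sub_mul_multichoose hs hn).symm

end GammaSeq

section Prabhakar

open Filter Ring Topology

/-- The three-parameter Mittag-Leffler function of Prabhakar, `E_{α,β}^{γ}(x)`, for the integer
exponents `γ = m + 1`, where its coefficients `(γ)_k / k!` are binomial coefficients. -/
noncomputable def prabhakar (α β : ℝ) (m : ℕ) (x : ℝ) : ℝ :=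
  ∑' k : ℕ, ((k + m).choose m : ℝ) * x ^ k * (Real.Gamma (k * α + β))⁻¹

lemma mittagLeffler_eq_prabhakar (α β x : ℝ) : mittagLeffler α β x = prabhakar α β 0 x := by
  simp [mittagLeffler, prabhakar, div_eq_mul_inv]

variable {α β : ℝ}

lemma exists_summable_choose_mul_pow_mul_inv_gammaSeq (hα : 0 < α) (hβ : 0 < β) (m : ℕ) {r : ℝ}
    (hr : 0 < r) :
    ∃ M : ℕ, M ≠ 0 ∧
      Summable fun k : ℕ ↦ ((k + m).choose m : ℝ) * r ^ k * (Real.GammaSeq (k * α + β) M)⁻¹ := by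
  obtain ⟨M, hrM, hM⟩ := (((tendsto_rpow_atTop hα).comp tendsto_natCast_atTop_atTop).eventually
    (eventually_gt_atTop r)).and (eventually_ne_atTop 0) |>.exists
  have hM0 : (0 : ℝ) < M := by positivity
  have hρ : r * (M : ℝ) ^ (-α) < 1 := by
    rw [Real.rpow_neg hM0.le, ← div_eq_mul_inv, div_lt_one (by positivity)]
    exact hrM
  refine ⟨M, hM, .of_nonneg_of_le (fun k ↦ ?_) (fun k ↦ ?_)
    ((summable_choose_mul_pow_mul_geometric hα.le hβ.le (by positivity) hρ m (M + 1)).mul_left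
      (M * (M : ℝ) ^ (-β)))⟩
  · have := gammaSeq_pos (s := k * α + β) (by positivity) hM
    positivity
  · have hpow : (M : ℝ) ^ (-(k * α + β)) = ((M : ℝ) ^ (-α)) ^ k * (M : ℝ) ^ (-β) := by
      rw [neg_add, Real.rpow_add hM0, ← Real.rpow_mul_natCast hM0.le, neg_mul, mul_comm α]
    calc ((k + m).choose m : ℝ) * r ^ k * (Real.GammaSeq (k * α + β) M)⁻¹
        ≤ ((k + m).choose m : ℝ) * r ^ k *
            (M * (1 + (k * α + β)) ^ (M + 1) * (M : ℝ) ^ (-(k * α + β))) := by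
          gcongr
          exact inv_gammaSeq_le (by positivity) hM
      _ = M * (M : ℝ) ^ (-β) * (((k + m).choose m : ℝ) * (1 + (k * α + β)) ^ (M + 1) *
            (r * (M : ℝ) ^ (-α)) ^ k) := by
          rw [hpow, mul_pow]
          ring

lemma summable_prabhakar (hα : 0 < α) (hβ : 0 < β) (m : ℕ) (x : ℝ) :
    Summable fun k : ℕ ↦ ((k + m).choose m : ℝ) * x ^ k * (Real.Gamma (k * α + β))⁻¹ := by
  obtain ⟨M, hM, hsummable⟩ :=
    exists_summable_choose_mul_pow_mul_inv_gammaSeq hα hβ m (r := |x| + 1) (by positivity)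
  refine .of_norm_bounded hsummable fun k ↦ ?_
  have hs : 0 < k * α + β := by positivity
  have hGammaSeq := gammaSeq_pos hs hM
  have hGamma := Real.Gamma_pos_of_pos hs
  rw [norm_mul, norm_mul, norm_pow, Real.norm_natCast, Real.norm_eq_abs x,
    Real.norm_of_nonneg (inv_nonneg.2 hGamma.le)]
  gcongr
  · linarith
  · exact gammaSeq_le_gamma hs hM

lemma tendsto_tsum_prabhakar (hα : 0 < α) (hβ : 0 < β) (m : ℕ) (x : ℝ) :
    Tendsto (fun n : ℕ ↦ ∑' k : ℕ, ((k + m).choose m : ℝ) * x ^ k *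
        ((n : ℝ) ^ (1 - (k * α + β)) * multichoose (k * α + β) n))
      atTop (𝓝 (prabhakar α β m x)) := by
  obtain ⟨M, hM, hsummable⟩ :=
    exists_summable_choose_mul_pow_mul_inv_gammaSeq hα hβ m (r := |x| + 1) (by positivity)
  refine tendsto_tsum_of_dominated_convergence hsummable (fun k ↦ ?_) ?_
  · exact (tendsto_rpow_one_sub_mul_multichoose (by positivity)).const_mul _
  · filter_upwards [eventually_ge_atTop M] with n hMn k
    have hs : 0 < k * α + β := by positivity
    have hmultichoose := multichoose_pos hs n
    rw [norm_mul, norm_mul, norm_pow, Real.norm_natCast, Real.norm_eq_abs x,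
      Real.norm_of_nonneg (mul_nonneg (by positivity) hmultichoose.le)]
    gcongr
    · linarith
    · exact rpow_one_sub_mul_multichoose_le hs hM hMn

lemma pow_mul_tsum_eq_coeff_resolventSeries (hα : 0 ≤ α) (m : ℕ) {n : ℕ} (hn : n ≠ 0) {x : ℝ}
    (hx : 0 < x) (hxn : x * (n : ℝ) ^ (-α) < 1) :
    x ^ m * ∑' k : ℕ, ((k + m).choose m : ℝ) * (-x) ^ k *
        ((n : ℝ) ^ (1 - (k * α + α * (m + 1))) * multichoose (k * α + α * (m + 1)) n) =
      (n : ℝ) ^ (1 - α) * ((x * (n : ℝ) ^ (-α)) ^ m *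
        PowerSeries.coeff n (resolventSeries α (x * (n : ℝ) ^ (-α)) ^ (m + 1))) := by
  have hn0 : (0 : ℝ) < n := by positivity
  have hpow (k : ℕ) : (n : ℝ) ^ (1 - (k * α + α * (m + 1))) =
      (n : ℝ) ^ (1 - α) * ((n : ℝ) ^ (-α)) ^ m * ((n : ℝ) ^ (-α)) ^ k := by
    rw [← Real.rpow_mul_natCast hn0.le, ← Real.rpow_mul_natCast hn0.le, ← Real.rpow_add hn0,
      ← Real.rpow_add hn0]
    congr 1
    ring
  rw [← (hasSum_coeff_resolventSeries_pow hα (by positivity) hxn m n).tsum_eq, ← tsum_mul_left,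
    ← tsum_mul_left, ← tsum_mul_left]
  refine tsum_congr fun k ↦ ?_
  rw [hpow, ← neg_mul, mul_pow, mul_pow]
  ring

lemma pow_mul_prabhakar_neg_mem_Icc (hα0 : 0 < α) (hα1 : α ≤ 1) (m : ℕ) {x : ℝ} (hx : 0 < x) :
    x ^ m * prabhakar α (α * (m + 1)) m (-x) ∈ Set.Icc 0 (Real.Gamma α)⁻¹ := by
  have hlim := (tendsto_tsum_prabhakar hα0 (β := α * (m + 1)) (by positivity) m (-x)).const_mul
    (x ^ m)
  have hsmall : ∀ᶠ n : ℕ in atTop, x * (n : ℝ) ^ (-α) < 1 := by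
    have h := ((tendsto_rpow_neg_atTop hα0).comp tendsto_natCast_atTop_atTop).const_mul x
    rw [mul_zero] at h
    exact h.eventually (eventually_lt_nhds one_pos)
  refine ⟨ge_of_tendsto hlim ?_, le_of_tendsto_of_tendsto hlim
    (tendsto_rpow_one_sub_mul_multichoose hα0) ?_⟩ <;>
  filter_upwards [hsmall, eventually_ne_atTop 0] with n hxn hn <;>
  rw [pow_mul_tsum_eq_coeff_resolventSeries hα0.le m hn hx hxn]
  · have hcoeff := (coeffNonneg_resolventSeries hα0.le hα1 (ε := x * (n : ℝ) ^ (-α))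
      (by positivity)).pow (m + 1) n
    positivity
  · have hcoeff := coeffNonneg_negBinomialSeries_sub_resolventSeries_pow hα0.le hα1
      (ε := x * (n : ℝ) ^ (-α)) (by positivity) m n
    rw [map_sub, ← map_pow, PowerSeries.coeff_C_mul, coeff_negBinomialSeries, sub_nonneg] at hcoeff
    gcongr

lemma hasDerivAt_tsum_mul_pow {c : ℕ → ℝ} (hc : ∀ r : ℝ, Summable fun k ↦ c k * r ^ k) (x : ℝ) :
    HasDerivAt (fun y ↦ ∑' k, c k * y ^ k) (∑' k : ℕ, (k + 1) * c (k + 1) * x ^ k) x := by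
  set r := |x| + 1 with hr
  have hbound : ∀ (k : ℕ), ∀ y ∈ Metric.ball (0 : ℝ) r,
      ‖c k * (k * y ^ (k - 1))‖ ≤ ‖c k * (2 * r) ^ k‖ := fun k y hy ↦ by
    have hk : (k : ℝ) ≤ 2 ^ k := by exact_mod_cast k.lt_two_pow_self.le
    have hy' : |y| ≤ r := by simpa using (mem_ball_zero_iff.1 hy).le
    have hr1 : 1 ≤ r := by simp [hr]
    rw [norm_mul, norm_mul, norm_mul, norm_pow, norm_pow, Real.norm_natCast, Real.norm_eq_abs y,
      Real.norm_of_nonneg (by positivity : (0 : ℝ) ≤ 2 * r), mul_pow]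
    gcongr
    calc |y| ^ (k - 1) ≤ r ^ (k - 1) := by gcongr
      _ ≤ r ^ k := pow_le_pow_right₀ hr1 k.pred_le
  have hx : x ∈ Metric.ball (0 : ℝ) r := by simp [hr]
  have hsummable := (hc (2 * r)).norm
  have h := hasDerivAt_tsum_of_isPreconnected hsummable Metric.isOpen_ball
    (convex_ball (0 : ℝ) r).isPreconnected
    (fun k y _ ↦ (hasDerivAt_pow k y).const_mul (c k)) hbound hx (hc x) hx
  rw [(Summable.of_norm_bounded hsummable fun k ↦ hbound k x hx).tsum_eq_zero_add] at h
  refine h.congr_deriv ?_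
  simp only [Nat.cast_zero, zero_mul, mul_zero, zero_add, Nat.add_sub_cancel, Nat.cast_succ]
  exact tsum_congr fun k ↦ by ring

lemma hasDerivAt_prabhakar (hα : 0 < α) (hβ : 0 < β) (m : ℕ) (x : ℝ) :
    HasDerivAt (prabhakar α β m) ((m + 1) * prabhakar α (α + β) (m + 1) x) x := by
  have h := hasDerivAt_tsum_mul_pow
    (c := fun k ↦ (k + m).choose m * (Real.Gamma (k * α + β))⁻¹)
    (fun r ↦ (summable_prabhakar hα hβ m r).congr fun k ↦ by ring) x
  refine (h.congr_deriv ?_).congr_of_eventuallyEq (.of_forall fun y ↦ ?_)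
  · rw [prabhakar, ← tsum_mul_left]
    refine tsum_congr fun k ↦ ?_
    have hchoose : ((k + (m + 1)).choose (m + 1) : ℝ) * (m + 1) =
        (k + 1 + m).choose m * (k + 1) := by
      have h := Nat.choose_succ_right_eq (k + 1 + m) m
      rw [Nat.add_sub_cancel] at h
      rw [← add_assoc k, add_right_comm k m 1]
      exact_mod_cast h
    push_cast
    rw [add_one_mul (k : ℝ) α, add_assoc _ α β]
    linear_combination (-(x ^ k * (Real.Gamma (k * α + (α + β)))⁻¹)) * hchoose
  · exact tsum_congr fun k ↦ by ring

end Prabhakar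

section SingularHolder

/-- Functions on `(0, ∞)` which, like `v ↦ v ^ (α - 1)`, blow up at `0` at most at the rate
`v ^ (α - 1)` and are locally Hölder of exponent `θ` with the scaling that this rate dictates. -/
structure IsSingularHolder (α θ M : ℝ) (f : ℝ → ℝ) : Prop where
  abs_le : ∀ ⦃v : ℝ⦄, 0 < v → |f v| ≤ M * v ^ (α - 1)
  abs_sub_le : ∀ ⦃v r : ℝ⦄, 0 < v → v ≤ r → |f v - f r| ≤ M * v ^ (α - 1 - θ) * (r - v) ^ θ

variable {α θ M : ℝ} {f : ℝ → ℝ}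

lemma IsSingularHolder.nonneg (hf : IsSingularHolder α θ M f) : 0 ≤ M := by
  simpa using (abs_nonneg _).trans (hf.abs_le one_pos)

lemma min_one_le_rpow {y θ : ℝ} (hy : 0 ≤ y) (hθ0 : 0 ≤ θ) (hθ1 : θ ≤ 1) : min 1 y ≤ y ^ θ := by
  rcases le_total 1 y with h | h
  · exact (min_le_left _ _).trans (Real.one_le_rpow h hθ0)
  · exact (min_le_right _ _).trans (Real.self_le_rpow_of_le_one hy h hθ1)

lemma isSingularHolder_of_abs_deriv_le (hα : α ≤ 1) (hθ0 : 0 ≤ θ) (hθ1 : θ ≤ 1)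
    (hf : ∀ v, 0 < v → |f v| ≤ M * v ^ (α - 1)) (hdiff : ∀ v, 0 < v → DifferentiableAt ℝ f v)
    (hderiv : ∀ v, 0 < v → |deriv f v| ≤ M * v ^ (α - 2)) :
    IsSingularHolder α θ (2 * M) f := by
  have hM : 0 ≤ M := by simpa using (abs_nonneg _).trans (hf 1 one_pos)
  refine ⟨fun v hv ↦ (hf v hv).trans (by gcongr; linarith), fun v r hv hvr ↦ ?_⟩
  have hr : 0 < r := hv.trans_le hvr
  have hrv : 0 ≤ r - v := sub_nonneg.2 hvr
  have htrivial : |f v - f r| ≤ 2 * M * v ^ (α - 1) * 1 := by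
    have hmono : r ^ (α - 1) ≤ v ^ (α - 1) := Real.rpow_le_rpow_of_nonpos hv hvr (by linarith)
    calc |f v - f r| ≤ |f v| + |f r| := abs_sub _ _
      _ ≤ M * v ^ (α - 1) + M * v ^ (α - 1) :=
          add_le_add (hf v hv) ((hf r hr).trans (by gcongr))
      _ = 2 * M * v ^ (α - 1) * 1 := by ring
  have hmeanValue : |f v - f r| ≤ 2 * M * v ^ (α - 1) * ((r - v) / v) := by
    have hsegment : ∀ x ∈ Set.Icc v r, ‖deriv f x‖ ≤ M * v ^ (α - 2) := fun x hx ↦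
      (hderiv x (hv.trans_le hx.1)).trans (mul_le_mul_of_nonneg_left
        (Real.rpow_le_rpow_of_nonpos hv hx.1 (by linarith)) hM)
    have h := (convex_Icc v r).norm_image_sub_le_of_norm_deriv_le
      (fun x hx ↦ hdiff x (hv.trans_le hx.1)) hsegment (Set.left_mem_Icc.2 hvr)
      (Set.right_mem_Icc.2 hvr)
    rw [norm_sub_rev, Real.norm_eq_abs, Real.norm_of_nonneg hrv] at h
    have hpow : v ^ (α - 2) = v ^ (α - 1) / v := by
      rw [← Real.rpow_sub_one hv.ne']
      ring_nf
    calc |f v - f r| ≤ M * v ^ (α - 2) * (r - v) := h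
      _ ≤ 2 * M * v ^ (α - 2) * (r - v) := by gcongr; linarith
      _ = 2 * M * v ^ (α - 1) * ((r - v) / v) := by rw [hpow]; ring
  calc |f v - f r| ≤ 2 * M * v ^ (α - 1) * min 1 ((r - v) / v) := by
        rw [mul_min_of_nonneg _ _ (by positivity)]
        exact le_min htrivial hmeanValue
    _ ≤ 2 * M * v ^ (α - 1) * ((r - v) / v) ^ θ := by
        gcongr
        exact min_one_le_rpow (by positivity) hθ0 hθ1
    _ = 2 * M * v ^ (α - 1 - θ) * (r - v) ^ θ := by
        rw [Real.div_rpow hrv hv.le, Real.rpow_sub hv (α - 1)]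
        ring

end SingularHolder

section RelaxationKernel

/-- The relaxation kernel `v ^ (α - 1) * E_{α,α}(-λ v ^ α)`, of which the function `φ` of the
theorem is the reflection `φ s = relaxationKernel α λ (t - s)`. -/
noncomputable def relaxationKernel (α lam v : ℝ) : ℝ :=
  v ^ (α - 1) * mittagLeffler α α (-lam * v ^ α)

variable {α lam x v : ℝ}

lemma mittagLeffler_self_neg_mem_Icc (hα0 : 0 < α) (hα1 : α ≤ 1) (hx : 0 < x) :
    mittagLeffler α α (-x) ∈ Set.Icc 0 (Real.Gamma α)⁻¹ := by
  simpa [mittagLeffler_eq_prabhakar] using pow_mul_prabhakar_neg_mem_Icc hα0 hα1 0 hx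

lemma hasDerivAt_mittagLeffler {β : ℝ} (hα : 0 < α) (hβ : 0 < β) (x : ℝ) :
    HasDerivAt (mittagLeffler α β) (prabhakar α (α + β) 1 x) x := by
  rw [funext (mittagLeffler_eq_prabhakar α β)]
  simpa using hasDerivAt_prabhakar hα hβ 0 x

lemma hasDerivAt_relaxationKernel (hα : 0 < α) (lam : ℝ) (hv : 0 < v) :
    HasDerivAt (relaxationKernel α lam)
      (-(v ^ (α - 2) * ((1 - α) * mittagLeffler α α (-(lam * v ^ α)) +
        α * (lam * v ^ α * prabhakar α (α + α) 1 (-(lam * v ^ α)))))) v := by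
  have hpow : HasDerivAt (fun y : ℝ ↦ y ^ (α - 1)) ((α - 1) * v ^ (α - 2)) v := by
    convert Real.hasDerivAt_rpow_const (p := α - 1) (Or.inl hv.ne') using 3
    ring
  have harg : HasDerivAt (fun y : ℝ ↦ -lam * y ^ α) (-lam * (α * v ^ (α - 1))) v :=
    (Real.hasDerivAt_rpow_const (Or.inl hv.ne')).const_mul _
  refine (hpow.mul ((hasDerivAt_mittagLeffler hα hα _).comp v harg)).congr_deriv ?_
  have hexp : v ^ (α - 1) * v ^ (α - 1) = v ^ (α - 2) * v ^ α := by
    rw [← Real.rpow_add hv, ← Real.rpow_add hv]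
    ring_nf
  simp only [Function.comp_apply, neg_mul]
  linear_combination (-prabhakar α (α + α) 1 (-(lam * v ^ α)) * lam * α) * hexp

lemma abs_relaxationKernel_le (hα0 : 0 < α) (hα1 : α ≤ 1) (hlam : 0 < lam) (hv : 0 < v) :
    |relaxationKernel α lam v| ≤ (Real.Gamma α)⁻¹ * v ^ (α - 1) := by
  obtain ⟨hnonneg, hle⟩ := mittagLeffler_self_neg_mem_Icc hα0 hα1 (x := lam * v ^ α) (by positivity)
  rw [relaxationKernel, neg_mul, abs_of_nonneg (by positivity), mul_comm]
  gcongr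

lemma abs_deriv_relaxationKernel_le (hα0 : 0 < α) (hα1 : α ≤ 1) (hlam : 0 < lam) (hv : 0 < v) :
    |deriv (relaxationKernel α lam) v| ≤ (Real.Gamma α)⁻¹ * v ^ (α - 2) := by
  have hx : 0 < lam * v ^ α := by positivity
  obtain ⟨hE0, hE⟩ := mittagLeffler_self_neg_mem_Icc hα0 hα1 hx
  obtain ⟨hD0, hD⟩ := pow_mul_prabhakar_neg_mem_Icc hα0 hα1 1 hx
  rw [pow_one, Nat.cast_one, mul_add_one, mul_one] at hD0 hD
  have : 0 ≤ 1 - α := sub_nonneg.2 hα1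
  rw [(hasDerivAt_relaxationKernel hα0 lam hv).deriv, abs_neg, abs_of_nonneg (by positivity),
    mul_comm]
  gcongr
  calc (1 - α) * mittagLeffler α α (-(lam * v ^ α)) +
        α * (lam * v ^ α * prabhakar α (α + α) 1 (-(lam * v ^ α)))
      ≤ (1 - α) * (Real.Gamma α)⁻¹ + α * (Real.Gamma α)⁻¹ := by gcongr
    _ = (Real.Gamma α)⁻¹ := by ring

lemma isSingularHolder_relaxationKernel {θ : ℝ} (hα0 : 0 < α) (hα1 : α ≤ 1) (hθ0 : 0 ≤ θ)
    (hθ1 : θ ≤ 1) (hlam : 0 < lam) :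
    IsSingularHolder α θ (2 * (Real.Gamma α)⁻¹) (relaxationKernel α lam) :=
  isSingularHolder_of_abs_deriv_le hα1 hθ0 hθ1
    (fun _ hv ↦ abs_relaxationKernel_le hα0 hα1 hlam hv)
    (fun _ hv ↦ (hasDerivAt_relaxationKernel hα0 lam hv).differentiableAt)
    (fun _ hv ↦ abs_deriv_relaxationKernel_le hα0 hα1 hlam hv)

end RelaxationKernel

section BetaIntegral

open MeasureTheory

variable {p q a b : ℝ}

lemma realBeta_pos (hp : 0 < p) (hq : 0 < q) : 0 < realBeta p q :=
  ProbabilityTheory.beta_pos hp hq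

lemma ofReal_realBeta (hp : 0 < p) (hq : 0 < q) :
    (realBeta p q : ℂ) = Complex.betaIntegral p q := by
  rw [Complex.betaIntegral_eq_Gamma_mul_div p q (by simpa) (by simpa), realBeta,
    ← Complex.ofReal_add]
  simp only [Complex.Gamma_ofReal, Complex.ofReal_mul, Complex.ofReal_div]

lemma integral_sub_rpow_mul_sub_rpow (hp : 0 < p) (hq : 0 < q) (hab : a < b) :
    ∫ u in a..b, (u - a) ^ (p - 1) * (b - u) ^ (q - 1) =
      (b - a) ^ (p + q - 1) * realBeta p q := by
  have hba : 0 < b - a := sub_pos.2 hab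
  have hshift := intervalIntegral.integral_comp_sub_right (a := a) (b := b)
    (fun x : ℝ ↦ x ^ (p - 1) * (b - a - x) ^ (q - 1)) a
  simp only [sub_sub_sub_cancel_right, sub_self] at hshift
  have hcast : ∀ x ∈ Set.uIcc 0 (b - a), ((x ^ (p - 1) * (b - a - x) ^ (q - 1) : ℝ) : ℂ) =
      (x : ℂ) ^ ((p : ℂ) - 1) * (((b - a : ℝ) : ℂ) - x) ^ ((q : ℂ) - 1) := fun x hx ↦ by
    rw [Set.uIcc_of_le hba.le] at hx
    rw [Complex.ofReal_mul, Complex.ofReal_cpow hx.1, Complex.ofReal_cpow (sub_nonneg.2 hx.2)]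
    push_cast
    rfl
  apply Complex.ofReal_injective
  rw [hshift, ← intervalIntegral.integral_ofReal, intervalIntegral.integral_congr hcast,
    Complex.betaIntegral_scaled p q hba, Complex.ofReal_mul, Complex.ofReal_cpow hba.le,
    ofReal_realBeta hp hq]
  push_cast
  rfl

lemma intervalIntegrable_sub_rpow_mul_sub_rpow (hp : 0 < p) (hq : 0 < q) (hab : a < b) :
    IntervalIntegrable (fun u ↦ (u - a) ^ (p - 1) * (b - u) ^ (q - 1)) volume a b := by
  refine intervalIntegral.intervalIntegrable_of_integral_ne_zero ?_
  rw [integral_sub_rpow_mul_sub_rpow hp hq hab]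
  exact (mul_pos (Real.rpow_pos_of_pos (sub_pos.2 hab) _) (realBeta_pos hp hq)).ne'

end BetaIntegral

section KernelOperator

open MeasureTheory

/-- The operator `(K_H^* φ)(τ) = K_H(t, τ) φ(τ) + ∫_τ^t (φ(u) - φ(τ)) ∂K_H/∂u(u, τ) du` of
fractional Brownian motion on `[0, t]`. -/
noncomputable def KHstar (H t : ℝ) (φ : ℝ → ℝ) (τ : ℝ) : ℝ :=
  KH H t τ * φ τ + ∫ u in τ..t, (φ u - φ τ) * dKH H u τ

variable {α θ H M s t τ u : ℝ} {f : ℝ → ℝ}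

lemma div_rpow_le_one (hH : H ≤ 1 / 2) (hs : 0 < s) (hst : s ≤ t) :
    (t / s) ^ (H - 1 / 2) ≤ 1 :=
  Real.rpow_le_one_of_one_le_of_nonpos ((one_le_div hs).2 hst) (by linarith)

lemma abs_dKH_le (hH : H ≤ 1 / 2) (hs : 0 < s) (hsu : s < u) :
    |dKH H u s| ≤ |cH H| * (u - s) ^ (H - 3 / 2) := by
  rw [dKH, abs_mul, abs_mul, abs_of_pos (Real.rpow_pos_of_pos (div_pos (hs.trans hsu) hs) _),
    abs_of_pos (Real.rpow_pos_of_pos (sub_pos.2 hsu) _)]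
  have := Real.rpow_nonneg (sub_pos.2 hsu).le (H - 3 / 2)
  gcongr
  exact mul_le_of_le_one_right (abs_nonneg _) (div_rpow_le_one hH hs hsu.le)

/-- The factor `u ^ (H - 3 / 2)` is shared between `s` and `u - s`: bounding all of it by
`s ^ (H - 3 / 2)` would leave a factor `s⁻¹` in `KH H t s`, which is not square integrable. -/
lemma integral_rpow_mul_sub_rpow_le (hH0 : 0 < H) (hH1 : H ≤ 1 / 2) (hs : 0 < s) (hst : s < t) :
    ∫ u in s..t, u ^ (H - 3 / 2) * (u - s) ^ (H - 1 / 2) ≤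
      realBeta (H / 2) 1 * (s ^ (3 * H / 2 - 1) * (t - s) ^ (H / 2)) := by
  have hpoint : ∀ u ∈ Set.Ioc s t, ‖u ^ (H - 3 / 2) * (u - s) ^ (H - 1 / 2)‖ ≤
      s ^ (3 * H / 2 - 1) * ((u - s) ^ (H / 2 - 1) * (t - u) ^ ((1 : ℝ) - 1)) := fun u hu ↦ by
    have hus : 0 < u - s := sub_pos.2 hu.1
    have hu0 : 0 < u := hs.trans hu.1
    rw [Real.norm_of_nonneg (by positivity), sub_self, Real.rpow_zero, mul_one]
    calc u ^ (H - 3 / 2) * (u - s) ^ (H - 1 / 2)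
        = u ^ (3 * H / 2 - 1) * u ^ (-(1 / 2 + H / 2)) * (u - s) ^ (H - 1 / 2) := by
          rw [← Real.rpow_add hu0]
          ring_nf
      _ ≤ s ^ (3 * H / 2 - 1) * (u - s) ^ (-(1 / 2 + H / 2)) * (u - s) ^ (H - 1 / 2) := by
          gcongr ?_ * ?_ * _
          · exact Real.rpow_le_rpow_of_nonpos hs hu.1.le (by linarith)
          · exact Real.rpow_le_rpow_of_nonpos hus (by linarith) (by linarith)
      _ = s ^ (3 * H / 2 - 1) * (u - s) ^ (H / 2 - 1) := by
          rw [mul_assoc, ← Real.rpow_add hus]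
          ring_nf
  have h := intervalIntegral.norm_integral_le_of_norm_le hst.le (.of_forall hpoint)
    ((intervalIntegrable_sub_rpow_mul_sub_rpow (by positivity) one_pos hst).const_mul _)
  rw [intervalIntegral.integral_const_mul,
    integral_sub_rpow_mul_sub_rpow (by positivity) one_pos hst, add_sub_cancel_right] at h
  exact (Real.le_norm_self _).trans (h.trans_eq (by ring))

lemma abs_KH_le (hH0 : 0 < H) (hH1 : H ≤ 1 / 2) (hs : 0 < s) (hst : s < t) :
    |KH H t s| ≤ |cH H| * ((t - s) ^ (H - 1 / 2) +
      realBeta (H / 2) 1 * (s ^ ((H - 1) / 2) * (t - s) ^ (H / 2))) := by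
  have : 0 < t - s := sub_pos.2 hst
  have ht : 0 < t := hs.trans hst
  have hfirst : |(t / s) ^ (H - 1 / 2) * (t - s) ^ (H - 1 / 2)| ≤ (t - s) ^ (H - 1 / 2) := by
    rw [abs_of_nonneg (by positivity)]
    exact mul_le_of_le_one_left (by positivity) (div_rpow_le_one hH1 hs hst.le)
  have hsecond : |(H - 1 / 2) * s ^ (1 / 2 - H) *
      ∫ u in s..t, u ^ (H - 3 / 2) * (u - s) ^ (H - 1 / 2)| ≤
      realBeta (H / 2) 1 * (s ^ ((H - 1) / 2) * (t - s) ^ (H / 2)) := by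
    have hnonneg : 0 ≤ ∫ u in s..t, u ^ (H - 3 / 2) * (u - s) ^ (H - 1 / 2) :=
      intervalIntegral.integral_nonneg hst.le fun u hu ↦
        mul_nonneg (Real.rpow_nonneg (hs.le.trans hu.1) _)
          (Real.rpow_nonneg (sub_nonneg.2 hu.1) _)
    have hcoeff : |H - 1 / 2| ≤ 1 := abs_le.2 ⟨by linarith, by linarith⟩
    rw [abs_mul, abs_mul, abs_of_nonneg hnonneg, abs_of_pos (Real.rpow_pos_of_pos hs _)]
    calc |H - 1 / 2| * s ^ (1 / 2 - H) * ∫ u in s..t, u ^ (H - 3 / 2) * (u - s) ^ (H - 1 / 2)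
        ≤ 1 * s ^ (1 / 2 - H) *
            (realBeta (H / 2) 1 * (s ^ (3 * H / 2 - 1) * (t - s) ^ (H / 2))) := by
          gcongr
          exact integral_rpow_mul_sub_rpow_le hH0 hH1 hs hst
      _ = realBeta (H / 2) 1 * (s ^ (1 / 2 - H) * s ^ (3 * H / 2 - 1) * (t - s) ^ (H / 2)) := by
          ring
      _ = realBeta (H / 2) 1 * (s ^ ((H - 1) / 2) * (t - s) ^ (H / 2)) := by
          rw [← Real.rpow_add hs]
          ring_nf
  rw [KH, abs_mul]
  gcongr
  exact (abs_sub _ _).trans (add_le_add hfirst hsecond)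

lemma IsSingularHolder.abs_integral_sub_mul_dKH_le (hf : IsSingularHolder α θ M f)
    (hH : H ≤ 1 / 2) (hHθ : 1 / 2 < H + θ) (hθα : θ < α) (hτ : 0 < τ) (hτt : τ < t) :
    |∫ u in τ..t, (f (t - u) - f (t - τ)) * dKH H u τ| ≤
      |cH H| * M * realBeta (H + θ - 1 / 2) (α - θ) * (t - τ) ^ (α + H - 3 / 2) := by
  have hM := hf.nonneg
  have hpoint : ∀ᵐ u, u ∈ Set.Ioc τ t → ‖(f (t - u) - f (t - τ)) * dKH H u τ‖ ≤
      |cH H| * M * ((u - τ) ^ (H + θ - 1 / 2 - 1) * (t - u) ^ (α - θ - 1)) := by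
    filter_upwards [volume.ae_ne t] with u hut hu
    have huτ : 0 < u - τ := sub_pos.2 hu.1
    have htu : 0 < t - u := sub_pos.2 (hu.2.lt_of_ne hut)
    have hincrement := hf.abs_sub_le htu (sub_le_sub_left hu.1.le t)
    rw [sub_sub_sub_cancel_left] at hincrement
    rw [norm_mul, Real.norm_eq_abs, Real.norm_eq_abs]
    calc |f (t - u) - f (t - τ)| * |dKH H u τ|
        ≤ M * (t - u) ^ (α - 1 - θ) * (u - τ) ^ θ * (|cH H| * (u - τ) ^ (H - 3 / 2)) := by
          gcongr
          exact abs_dKH_le hH hτ hu.1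
      _ = |cH H| * M * ((u - τ) ^ θ * (u - τ) ^ (H - 3 / 2) * (t - u) ^ (α - 1 - θ)) := by ring
      _ = |cH H| * M * ((u - τ) ^ (H + θ - 1 / 2 - 1) * (t - u) ^ (α - θ - 1)) := by
          rw [← Real.rpow_add huτ]
          ring_nf
  have h := intervalIntegral.norm_integral_le_of_norm_le hτt.le hpoint
    ((intervalIntegrable_sub_rpow_mul_sub_rpow (by linarith) (by linarith) hτt).const_mul _)
  rw [intervalIntegral.integral_const_mul,
    integral_sub_rpow_mul_sub_rpow (by linarith) (by linarith) hτt] at h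
  refine h.trans_eq ?_
  rw [show H + θ - 1 / 2 + (α - θ) - 1 = α + H - 3 / 2 by ring]
  ring

lemma IsSingularHolder.abs_KH_mul_le (hf : IsSingularHolder α θ M f) (hH0 : 0 < H)
    (hH1 : H ≤ 1 / 2) (hτ : 0 < τ) (hτt : τ < t) :
    |KH H t τ * f (t - τ)| ≤ |cH H| * M * ((t - τ) ^ (α + H - 3 / 2) +
      realBeta (H / 2) 1 * (τ ^ ((H - 1) / 2) * (t - τ) ^ (H / 2 + α - 1))) := by
  have htτ : 0 < t - τ := sub_pos.2 hτt
  have := (realBeta_pos (half_pos hH0) one_pos).le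
  rw [abs_mul]
  calc |KH H t τ| * |f (t - τ)|
      ≤ |cH H| * ((t - τ) ^ (H - 1 / 2) +
          realBeta (H / 2) 1 * (τ ^ ((H - 1) / 2) * (t - τ) ^ (H / 2))) *
          (M * (t - τ) ^ (α - 1)) := by
        gcongr
        exacts [abs_KH_le hH0 hH1 hτ hτt, hf.abs_le htτ]
    _ = |cH H| * M * ((t - τ) ^ (H - 1 / 2) * (t - τ) ^ (α - 1) + realBeta (H / 2) 1 *
          (τ ^ ((H - 1) / 2) * ((t - τ) ^ (H / 2) * (t - τ) ^ (α - 1)))) := by ring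
    _ = _ := by
        rw [← Real.rpow_add htτ, ← Real.rpow_add htτ]
        ring_nf

lemma IsSingularHolder.abs_KHstar_le (hf : IsSingularHolder α θ M f) (hH0 : 0 < H)
    (hH1 : H ≤ 1 / 2) (hHθ : 1 / 2 < H + θ) (hθα : θ < α) (hτ : 0 < τ) (hτt : τ < t) :
    |KHstar H t (fun s ↦ f (t - s)) τ| ≤
      |cH H| * M * ((1 + realBeta (H + θ - 1 / 2) (α - θ)) * (t - τ) ^ (α + H - 3 / 2) +
        realBeta (H / 2) 1 * (τ ^ ((H - 1) / 2) * (t - τ) ^ (H / 2 + α - 1))) := by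
  refine (abs_add_le _ _).trans ((add_le_add (hf.abs_KH_mul_le hH0 hH1 hτ hτt)
    (hf.abs_integral_sub_mul_dKH_le hH1 hHθ hθα hτ hτt)).trans_eq ?_)
  ring

lemma IsSingularHolder.sq_KHstar_le (hf : IsSingularHolder α θ M f) (hH0 : 0 < H)
    (hH1 : H ≤ 1 / 2) (hHθ : 1 / 2 < H + θ) (hθα : θ < α) (hτ : 0 < τ) (hτt : τ < t) :
    KHstar H t (fun s ↦ f (t - s)) τ ^ 2 ≤
      2 * (|cH H| * M) ^ 2 * ((1 + realBeta (H + θ - 1 / 2) (α - θ)) ^ 2 *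
          ((τ - 0) ^ ((1 : ℝ) - 1) * (t - τ) ^ (2 * α + 2 * H - 2 - 1)) +
        realBeta (H / 2) 1 ^ 2 * ((τ - 0) ^ (H - 1) * (t - τ) ^ (H + 2 * α - 1 - 1))) := by
  have htτ : 0 < t - τ := sub_pos.2 hτt
  have hbound := hf.abs_KHstar_le hH0 hH1 hHθ hθα hτ hτt
  set b₁ := realBeta (H + θ - 1 / 2) (α - θ)
  set b₂ := realBeta (H / 2) 1
  have hsq₁ : ((t - τ) ^ (α + H - 3 / 2)) ^ 2 = (t - τ) ^ (2 * α + 2 * H - 2 - 1) := by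
    rw [← Real.rpow_mul_natCast htτ.le]
    ring_nf
  have hsq₂ : (τ ^ ((H - 1) / 2) * (t - τ) ^ (H / 2 + α - 1)) ^ 2 =
      τ ^ (H - 1) * (t - τ) ^ (H + 2 * α - 1 - 1) := by
    rw [mul_pow, ← Real.rpow_mul_natCast hτ.le, ← Real.rpow_mul_natCast htτ.le]
    ring_nf
  rw [sub_zero, sub_self, Real.rpow_zero, one_mul, ← hsq₁, ← hsq₂]
  calc KHstar H t (fun s ↦ f (t - s)) τ ^ 2
      ≤ (|cH H| * M * ((1 + b₁) * (t - τ) ^ (α + H - 3 / 2) +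
          b₂ * (τ ^ ((H - 1) / 2) * (t - τ) ^ (H / 2 + α - 1)))) ^ 2 := by
        rw [← sq_abs]
        gcongr
    _ = (|cH H| * M) ^ 2 * ((1 + b₁) * (t - τ) ^ (α + H - 3 / 2) +
          b₂ * (τ ^ ((H - 1) / 2) * (t - τ) ^ (H / 2 + α - 1))) ^ 2 := mul_pow _ _ _
    _ ≤ (|cH H| * M) ^ 2 * (2 * (((1 + b₁) * (t - τ) ^ (α + H - 3 / 2)) ^ 2 +
          (b₂ * (τ ^ ((H - 1) / 2) * (t - τ) ^ (H / 2 + α - 1))) ^ 2)) := by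
        gcongr
        exact add_sq_le
    _ = _ := by ring

theorem exists_integral_sq_KHstar_le (hH0 : 0 < H) (hH1 : H ≤ 1 / 2) (hHθ : 1 / 2 < H + θ)
    (hθα : θ < α) (hαH : 1 < α + H) :
    ∃ C : ℝ, 0 ≤ C ∧ ∀ ⦃M : ℝ⦄ ⦃f : ℝ → ℝ⦄, IsSingularHolder α θ M f → ∀ t : ℝ, 0 < t →
      ∫ τ in 0..t, KHstar H t (fun s ↦ f (t - s)) τ ^ 2 ≤
        C * M ^ 2 * t ^ (2 * α + 2 * H - 2) := by
  set b₁ := realBeta (H + θ - 1 / 2) (α - θ)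
  set b₂ := realBeta (H / 2) 1
  have hexp₁ : 0 < 2 * α + 2 * H - 2 := by linarith
  have hexp₂ : 0 < H + 2 * α - 1 := by linarith
  have hbeta₁ := (realBeta_pos one_pos hexp₁).le
  have hbeta₂ := (realBeta_pos hH0 hexp₂).le
  refine ⟨2 * |cH H| ^ 2 * ((1 + b₁) ^ 2 * realBeta 1 (2 * α + 2 * H - 2) +
    b₂ ^ 2 * realBeta H (H + 2 * α - 1)), by positivity, fun M f hf t ht ↦ ?_⟩
  have hint₁ := (intervalIntegrable_sub_rpow_mul_sub_rpow one_pos hexp₁ ht).const_mul ((1 + b₁) ^ 2)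
  have hint₂ := (intervalIntegrable_sub_rpow_mul_sub_rpow hH0 hexp₂ ht).const_mul (b₂ ^ 2)
  have hpoint : ∀ᵐ τ, τ ∈ Set.Ioc 0 t → ‖KHstar H t (fun s ↦ f (t - s)) τ ^ 2‖ ≤
      2 * (|cH H| * M) ^ 2 *
        ((1 + b₁) ^ 2 * ((τ - 0) ^ ((1 : ℝ) - 1) * (t - τ) ^ (2 * α + 2 * H - 2 - 1)) +
          b₂ ^ 2 * ((τ - 0) ^ (H - 1) * (t - τ) ^ (H + 2 * α - 1 - 1))) := by
    filter_upwards [volume.ae_ne t] with τ hτt hτ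
    rw [Real.norm_of_nonneg (sq_nonneg _)]
    exact hf.sq_KHstar_le hH0 hH1 hHθ hθα hτ.1 (hτ.2.lt_of_ne hτt)
  have h := intervalIntegral.norm_integral_le_of_norm_le ht.le hpoint
    ((hint₁.add hint₂).const_mul _)
  rw [intervalIntegral.integral_const_mul, intervalIntegral.integral_add hint₁ hint₂,
    intervalIntegral.integral_const_mul, intervalIntegral.integral_const_mul,
    integral_sub_rpow_mul_sub_rpow one_pos hexp₁ ht, integral_sub_rpow_mul_sub_rpow hH0 hexp₂ ht,
    sub_zero, add_sub_cancel_left,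
    show H + (H + 2 * α - 1) - 1 = 2 * α + 2 * H - 2 by ring] at h
  exact (Real.le_norm_self _).trans (h.trans_eq (by ring))

end KernelOperator

theorem KHstar_phi_L2_bound (α H : ℝ) (hH0 : 0 < H) (hH1 : H < 1/2)
    (hα0 : 1/2 < α) (hα1 : α < 1) (hαH : 1 < α + H) :
    ∃ C : ℝ, 0 < C ∧ ∀ lam t : ℝ, 0 < lam → 0 < t →
      (∫ τ in (0:ℝ)..t,
          (KH H t τ * ((t - τ) ^ (α - 1) * mittagLeffler α α (-lam * (t - τ) ^ α))
            + ∫ u in τ..t,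
              ((t - u) ^ (α - 1) * mittagLeffler α α (-lam * (t - u) ^ α)
                - (t - τ) ^ (α - 1) * mittagLeffler α α (-lam * (t - τ) ^ α))
              * dKH H u τ) ^ 2)
        ≤ C * t ^ (2*α + 2*H - 2) := by
  obtain ⟨C, hC, hbound⟩ :=
    exists_integral_sq_KHstar_le (θ := 1 / 2) hH0 hH1.le (by linarith) hα0 hαH
  refine ⟨C * (2 * (Real.Gamma α)⁻¹) ^ 2 + 1, by positivity, fun lam t hlam ht ↦ ?_⟩
  have hkernel : IsSingularHolder α (1 / 2) (2 * (Real.Gamma α)⁻¹) (relaxationKernel α lam) :=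
    isSingularHolder_relaxationKernel (by linarith) hα1.le (by norm_num) (by norm_num) hlam
  calc _ ≤ C * (2 * (Real.Gamma α)⁻¹) ^ 2 * t ^ (2 * α + 2 * H - 2) := hbound hkernel t ht
    _ ≤ (C * (2 * (Real.Gamma α)⁻¹) ^ 2 + 1) * t ^ (2 * α + 2 * H - 2) := by
        gcongr
        linarith
end

section
/- Let α > 0 and 1/2 < H < 1 with α + H > 1. Then the series ∑_{n=0}^∞ binom(2H-2, n) (-1)^n/(α+n) converges to a finite value S (where binom(x,n) denotes the generalized binomial coefficient x(x-1)⋯(x-n+1)/n!), and for every t > 0, ∫_0^t ∫_0^t p^{α-1} q^{α-1} |p-q|^{2H-2} dp dq = (2S/(2α+2H-2)) · t^{2α+2H-2}. -/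
open Real intervalIntegral

/-- The generalized binomial coefficient `x(x-1)⋯(x-n+1)/n!` for real `x`. -/
noncomputable def genBinom (x : ℝ) (n : ℕ) : ℝ :=
  (∏ i ∈ Finset.range n, (x - i)) / (n.factorial : ℝ)

/-!
The kernel is symmetric, so the double integral is twice the integral over the triangle `p ≤ q`.
There the inner integral is homogeneous, `∫₀^q p^(α-1) (q-p)^c dp = q^(α+c) B(α, c+1)` with
`c = 2H - 2`, which leaves the integral of a power of `q`.

It remains to see that `S = B(α, c+1)`. For `-1 < c ≤ 0` the numbers `(-1)ⁿ binom(c, n)` are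
nonnegative, so the binomial series of `(1-x)^c` may be integrated termwise against `x^(α-1)`.
Larger `c` are reached by unit steps, since Pascal's rule for `binom(c+1, n)` mirrors the recurrence
`B(α, β+1) = B(α, β) - B(α+1, β)`.
-/

section Fubini

open MeasureTheory Set Function

section Sections

variable {X Y E : Type*} [MeasurableSpace X] [MeasurableSpace Y] [NormedAddCommGroup E]
  {μ : Measure X} {ν : Measure Y} [SFinite ν] {T : Set (X × Y)} {f : X → Y → E}

theorem integrableOn_prod_iff_integrableOn_sections (hT : MeasurableSet T)
    (hf : AEStronglyMeasurable (uncurry f) ((μ.prod ν).restrict T)) :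
    IntegrableOn (uncurry f) T (μ.prod ν) ↔
      (∀ᵐ x ∂μ, IntegrableOn (f x) (Prod.mk x ⁻¹' T) ν) ∧
        Integrable (fun x ↦ ∫ y in Prod.mk x ⁻¹' T, ‖f x y‖ ∂ν) μ := by
  have hsection (x : X) : MeasurableSet (Prod.mk x ⁻¹' T) := measurable_prodMk_left hT
  have hslice (x : X) (y : Y) : T.indicator (uncurry f) (x, y) =
      (Prod.mk x ⁻¹' T).indicator (f x) y := rfl
  rw [← integrable_indicator_iff hT,
    integrable_prod_iff ((aestronglyMeasurable_indicator_iff hT).2 hf)]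
  simp only [hslice, integrable_indicator_iff (hsection _), norm_indicator_eq_indicator_norm,
    MeasureTheory.integral_indicator (hsection _)]

theorem setIntegral_prod_eq_integral_sections [NormedSpace ℝ E] [SFinite μ] (hT : MeasurableSet T)
    (hf : IntegrableOn (uncurry f) T (μ.prod ν)) :
    ∫ z in T, uncurry f z ∂μ.prod ν = ∫ x, ∫ y in Prod.mk x ⁻¹' T, f x y ∂ν ∂μ := by
  rw [← MeasureTheory.integral_indicator hT, integral_prod _ (hf.integrable_indicator hT)]
  congr 1 with x
  exact MeasureTheory.integral_indicator (measurable_prodMk_left hT)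

end Sections

section Symmetric

variable {X E : Type*} [LinearOrder X] [MeasurableSpace X] [NormedAddCommGroup E] {μ : Measure X}
  [SFinite μ] {f : X → X → E}

theorem integrable_uncurry_of_symmetric (hsymm : ∀ x y, f x y = f y x)
    (hf : IntegrableOn (uncurry f) {z | z.2 ≤ z.1} (μ.prod μ)) :
    Integrable (uncurry f) (μ.prod μ) := by
  have hswap : uncurry f ∘ Prod.swap = uncurry f := funext fun z ↦ hsymm z.2 z.1
  have hf' : IntegrableOn (uncurry f) {z | z.1 ≤ z.2} (μ.prod μ) := by
    rw [← hswap]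
    exact (Measure.measurePreserving_swap.integrableOn_comp_preimage
      MeasurableEquiv.prodComm.measurableEmbedding).2 hf
  rw [← integrableOn_univ]
  exact (hf.union hf').mono_set fun z _ ↦ le_total z.2 z.1

variable [TopologicalSpace X] [OrderClosedTopology X] [SecondCountableTopology X]
  [OpensMeasurableSpace X] [NormedSpace ℝ E]

theorem integral_integral_eq_two_smul_of_symmetric [NullSingletonClass μ]
    (hsymm : ∀ x y, f x y = f y x)
    (hf : IntegrableOn (uncurry f) {z | z.2 ≤ z.1} (μ.prod μ)) :
    ∫ x, ∫ y, f x y ∂μ ∂μ = (2 : ℝ) • ∫ x, ∫ y in Iic x, f x y ∂μ ∂μ := by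
  have hint := integrable_uncurry_of_symmetric hsymm hf
  have hle : MeasurableSet {z : X × X | z.2 ≤ z.1} := measurableSet_le measurable_snd measurable_fst
  have hlt : MeasurableSet {z : X × X | z.2 < z.1} := measurableSet_lt measurable_snd measurable_fst
  have hlower : ∫ z in {z | z.2 ≤ z.1}, uncurry f z ∂μ.prod μ = ∫ x, ∫ y in Iic x, f x y ∂μ ∂μ :=
    setIntegral_prod_eq_integral_sections hle hf
  have hupper : ∫ z in {z | z.2 ≤ z.1}ᶜ, uncurry f z ∂μ.prod μ =
      ∫ x, ∫ y in Iic x, f x y ∂μ ∂μ := calc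
    _ = ∫ z in Prod.swap ⁻¹' {z | z.2 < z.1}, uncurry f z.swap ∂μ.prod μ := by
      simp only [uncurry, Prod.fst_swap, Prod.snd_swap, hsymm, preimage_ofPred_eq,
        compl_ofPred, not_le]
    _ = ∫ z in {z | z.2 < z.1}, uncurry f z ∂μ.prod μ :=
      Measure.measurePreserving_swap.setIntegral_preimage_emb
        MeasurableEquiv.prodComm.measurableEmbedding _ _
    _ = ∫ x, ∫ y in Iio x, f x y ∂μ ∂μ :=
      setIntegral_prod_eq_integral_sections hlt hint.integrableOn
    _ = ∫ x, ∫ y in Iic x, f x y ∂μ ∂μ := by simp only [integral_Iic_eq_integral_Iio]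
  rw [integral_integral hint]
  exact (integral_add_compl hle hint).symm.trans (by rw [hlower, hupper, two_smul])

theorem intervalIntegral_intervalIntegral_eq_two_smul_of_symmetric
    {μ : Measure ℝ} [SFinite μ] [NullSingletonClass μ] {a b : ℝ} {f : ℝ → ℝ → E} (hab : a ≤ b)
    (hsymm : ∀ x y, f x y = f y x)
    (hf : AEStronglyMeasurable (uncurry f) ((μ.restrict (Ioc a b)).prod (μ.restrict (Ioc a b))))
    (hsection : ∀ x ∈ Ioc a b, IntervalIntegrable (f x) μ a x)
    (hnorm : IntervalIntegrable (fun x ↦ ∫ y in a..x, ‖f x y‖ ∂μ) μ a b) :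
    ∫ x in a..b, ∫ y in a..b, f x y ∂μ ∂μ =
      (2 : ℝ) • ∫ x in a..b, ∫ y in a..x, f x y ∂μ ∂μ := by
  have hrestrict {x : ℝ} (hx : x ∈ Ioc a b) :
      (μ.restrict (Ioc a b)).restrict (Iic x) = μ.restrict (Ioc a x) := by
    rw [Measure.restrict_restrict measurableSet_Iic, inter_comm, Ioc_inter_Iic, min_eq_right hx.2]
  have htriangle : IntegrableOn (uncurry f) {z | z.2 ≤ z.1}
      ((μ.restrict (Ioc a b)).prod (μ.restrict (Ioc a b))) := by
    refine (integrableOn_prod_iff_integrableOn_sections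
      (measurableSet_le measurable_snd measurable_fst) hf.restrict).2
        ⟨ae_restrict_of_forall_mem measurableSet_Ioc fun x hx ↦ ?_, ?_⟩
    · change Integrable (f x) ((μ.restrict (Ioc a b)).restrict (Iic x))
      rw [hrestrict hx]
      exact (hsection x hx).1
    · refine IntegrableOn.congr_fun hnorm.1 (fun x hx ↦ ?_) measurableSet_Ioc
      change _ = ∫ y, ‖f x y‖ ∂(μ.restrict (Ioc a b)).restrict (Iic x)
      rw [hrestrict hx, integral_of_le hx.1.le]
  simp only [integral_of_le hab]
  rw [integral_integral_eq_two_smul_of_symmetric hsymm htriangle]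
  congr 1
  refine setIntegral_congr_fun measurableSet_Ioc fun x hx ↦ ?_
  simp only [hrestrict hx, integral_of_le hx.1.le]

end Symmetric

theorem hasSum_integral_of_nonneg {X ι : Type*} [MeasurableSpace X] [Countable ι] {μ : Measure X}
    {F : ι → X → ℝ} {g : X → ℝ} (hF : ∀ i, AEStronglyMeasurable (F i) μ)
    (hF0 : ∀ i, 0 ≤ᵐ[μ] F i) (hg : Integrable g μ)
    (hFg : ∀ᵐ x ∂μ, HasSum (fun i ↦ F i x) (g x)) :
    HasSum (fun i ↦ ∫ x, F i x ∂μ) (∫ x, g x ∂μ) :=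
  hasSum_integral_of_dominated_convergence F hF
    (fun i ↦ (hF0 i).mono fun _ hx ↦ (Real.norm_of_nonneg hx).le)
    (hFg.mono fun _ hx ↦ hx.summable)
    (hg.congr (hFg.mono fun _ hx ↦ hx.tsum_eq.symm)) hFg

end Fubini

section Beta

open MeasureTheory Set ProbabilityTheory

variable {α β c q : ℝ}

theorem betaIntegral_ofReal (hα : 0 < α) (hβ : 0 < β) :
    Complex.betaIntegral α β = (beta α β : ℂ) := by
  rw [Complex.betaIntegral_eq_Gamma_mul_div _ _ (by simpa) (by simpa), beta]
  simp only [← Complex.ofReal_add, Complex.Gamma_ofReal, Complex.ofReal_mul, Complex.ofReal_div]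

theorem beta_add_one_right (hα : α ≠ 0) (hβ : β ≠ 0) (hαβ : α + β ≠ 0) :
    beta α (β + 1) = beta α β - beta (α + 1) β := by
  simp only [beta, ← add_assoc, add_right_comm α 1 β, Gamma_add_one hα, Gamma_add_one hβ,
    Gamma_add_one hαβ]
  field_simp
  ring

theorem integral_Ioo_rpow_sub_one (hα : 0 < α) :
    ∫ x in Ioo (0 : ℝ) 1, x ^ (α - 1) = 1 / α := by
  rw [← integral_Ioc_eq_integral_Ioo, ← integral_of_le zero_le_one,
    integral_rpow (.inl (by linarith)), sub_add_cancel, one_rpow, zero_rpow hα.ne', sub_zero]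

theorem integral_rpow_mul_sub_rpow (hα : 0 < α) (hc : -1 < c) (hq : 0 < q) :
    ∫ p in (0 : ℝ)..q, p ^ (α - 1) * (q - p) ^ c = q ^ (α + c) * beta α (c + 1) := by
  have hcast : ∀ p ∈ uIcc 0 q, ((p ^ (α - 1) * (q - p) ^ c : ℝ) : ℂ) =
      (p : ℂ) ^ ((α : ℂ) - 1) * ((q : ℂ) - p) ^ (((c + 1 : ℝ) : ℂ) - 1) := by
    intro p hp
    rw [uIcc_of_le hq.le] at hp
    rw [Complex.ofReal_mul, Complex.ofReal_cpow hp.1, Complex.ofReal_cpow (sub_nonneg.2 hp.2)]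
    push_cast
    rw [add_sub_cancel_right]
  apply Complex.ofReal_injective
  rw [← intervalIntegral.integral_ofReal, integral_congr hcast, Complex.betaIntegral_scaled _ _ hq,
    betaIntegral_ofReal hα (by linarith), Complex.ofReal_mul, Complex.ofReal_cpow hq.le]
  push_cast
  ring_nf

-- The integral is positive, whereas a non-integrable function would have integral zero.
theorem intervalIntegrable_rpow_mul_sub_rpow (hα : 0 < α) (hc : -1 < c) (hq : 0 < q) :
    IntervalIntegrable (fun p ↦ p ^ (α - 1) * (q - p) ^ c) volume 0 q := by
  refine not_imp_comm.1 integral_undef ?_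
  rw [integral_rpow_mul_sub_rpow hα hc hq]
  exact (mul_pos (rpow_pos_of_pos hq _) (beta_pos hα (by linarith))).ne'

end Beta

section BinomialSeries

open MeasureTheory Set ProbabilityTheory

variable {α c : ℝ}

theorem genBinom_eq_choose (c : ℝ) (n : ℕ) : genBinom c n = Ring.choose c n := by
  have heval : (descPochhammer ℤ n).smeval c = (descPochhammer ℝ n).eval c := by
    rw [← descPochhammer_map (algebraMap ℤ ℝ), Polynomial.eval_map_algebraMap,
      Polynomial.aeval_eq_smeval]
  rw [Ring.choose_eq_smul, heval, descPochhammer_eval_eq_prod_range, genBinom, smul_eq_mul,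
    div_eq_inv_mul]

theorem genBinom_zero_right (c : ℝ) : genBinom c 0 = 1 := by
  simp [genBinom]

theorem genBinom_add_one_add_one (c : ℝ) (n : ℕ) :
    genBinom (c + 1) (n + 1) = genBinom c n + genBinom c (n + 1) := by
  simp only [genBinom_eq_choose, Ring.choose_succ_succ]

theorem genBinom_mul_neg_one_pow_nonneg (hc : c ≤ 0) (n : ℕ) :
    0 ≤ genBinom c n * (-1) ^ n := by
  have hprod : genBinom c n * (-1) ^ n = (∏ i ∈ Finset.range n, ((i : ℝ) - c)) / n.factorial := by
    simp only [genBinom, ← neg_sub c, Finset.prod_neg, Finset.card_range]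
    ring
  rw [hprod]
  exact div_nonneg (Finset.prod_nonneg fun i _ ↦ by linarith [i.cast_nonneg (α := ℝ)])
    n.factorial.cast_nonneg

theorem hasSum_genBinom_mul_pow (c : ℝ) {x : ℝ} (hx : |x| < 1) :
    HasSum (fun n ↦ genBinom c n * x ^ n) ((1 + x) ^ c) := by
  have hball : x ∈ Metric.eball (0 : ℝ) 1 := by
    simpa [enorm_eq_nnnorm, ← NNReal.coe_lt_one] using hx
  simpa [binomialSeries, genBinom_eq_choose, mul_comm] using
    (one_add_rpow_hasFPowerSeriesOnBall_zero (a := c)).hasSum hball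

theorem hasSum_genBinom_div_of_nonpos (hα : 0 < α) (hc : -1 < c) (hc0 : c ≤ 0) :
    HasSum (fun n : ℕ ↦ genBinom c n * (-1) ^ n / (α + n)) (beta α (c + 1)) := by
  let F (n : ℕ) (x : ℝ) : ℝ := genBinom c n * (-1) ^ n * x ^ (α + n - 1)
  have hF_nonneg (n : ℕ) : ∀ x ∈ Ioo (0 : ℝ) 1, 0 ≤ F n x := fun x hx ↦
    mul_nonneg (genBinom_mul_neg_one_pow_nonneg hc0 n) (rpow_nonneg hx.1.le _)
  have hF_hasSum : ∀ x ∈ Ioo (0 : ℝ) 1,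
      HasSum (fun n ↦ F n x) (x ^ (α - 1) * (1 - x) ^ c) := by
    intro x hx
    have hseries := (hasSum_genBinom_mul_pow c (x := -x)
      (by rw [abs_neg, abs_of_pos hx.1]; exact hx.2)).mul_left (x ^ (α - 1))
    convert! hseries using 2 with n
    simp only [F]
    rw [add_sub_right_comm, rpow_add_natCast hx.1.ne', neg_pow x]
    ring
  have hF_integral (n : ℕ) :
      ∫ x in Ioo (0 : ℝ) 1, F n x = genBinom c n * (-1) ^ n / (α + n) := by
    rw [MeasureTheory.integral_const_mul, integral_Ioo_rpow_sub_one (by positivity), mul_one_div]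
  have hbeta : ∫ x in Ioo (0 : ℝ) 1, x ^ (α - 1) * (1 - x) ^ c = beta α (c + 1) := by
    rw [← integral_Ioc_eq_integral_Ioo, ← integral_of_le zero_le_one,
      integral_rpow_mul_sub_rpow hα hc one_pos, one_rpow, one_mul]
  rw [← hbeta]
  simp only [← hF_integral]
  exact hasSum_integral_of_nonneg (fun n ↦ by fun_prop)
    (fun n ↦ ae_restrict_of_forall_mem measurableSet_Ioo (hF_nonneg n))
    ((intervalIntegrable_iff_integrableOn_Ioo_of_le zero_le_one).1
      (intervalIntegrable_rpow_mul_sub_rpow hα hc one_pos))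
    (ae_restrict_of_forall_mem measurableSet_Ioo hF_hasSum)

theorem hasSum_genBinom_add_one_div {s s' : ℝ}
    (hs : HasSum (fun n : ℕ ↦ genBinom c n * (-1) ^ n / (α + n)) s)
    (hs' : HasSum (fun n : ℕ ↦ genBinom c n * (-1) ^ n / (α + 1 + n)) s') :
    HasSum (fun n : ℕ ↦ genBinom (c + 1) n * (-1) ^ n / (α + n)) (s - s') := by
  rw [← hasSum_nat_add_iff' 1] at hs ⊢
  simp only [Finset.sum_range_one, genBinom_zero_right] at hs ⊢
  rw [sub_right_comm]
  convert! hs.sub hs' using 2 with n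
  rw [genBinom_add_one_add_one]
  push_cast
  ring

theorem hasSum_genBinom_div (hα : 0 < α) (hc : -1 < c) :
    HasSum (fun n : ℕ ↦ genBinom c n * (-1) ^ n / (α + n)) (beta α (c + 1)) := by
  obtain ⟨N, hN⟩ := exists_nat_ge c
  induction N generalizing α c with
  | zero => exact hasSum_genBinom_div_of_nonpos hα hc (by simpa using hN)
  | succ N ih =>
    rcases le_or_gt c 0 with hc0 | hc0
    · exact hasSum_genBinom_div_of_nonpos hα hc hc0
    obtain ⟨d, rfl⟩ : ∃ d, c = d + 1 := ⟨c - 1, by ring⟩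
    have hd : -1 < d := by linarith
    have hdN : d ≤ N := by simpa using hN
    rw [beta_add_one_right hα.ne' hc0.ne' (by positivity)]
    exact hasSum_genBinom_add_one_div (ih hα hd hdN) (ih (by positivity) hd hdN)

end BinomialSeries

section DoubleIntegral

open MeasureTheory Set Function ProbabilityTheory

variable {α c p q t : ℝ}

/-- The Riesz kernel `|p - q| ^ c` weighted by `p ^ (α - 1)` and `q ^ (α - 1)`; the integrand of
the double integral. -/
noncomputable def weightedRieszKernel (α c q p : ℝ) : ℝ :=
  p ^ (α - 1) * q ^ (α - 1) * |p - q| ^ c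

theorem weightedRieszKernel_comm (α c q p : ℝ) :
    weightedRieszKernel α c q p = weightedRieszKernel α c p q := by
  rw [weightedRieszKernel, weightedRieszKernel, abs_sub_comm, mul_comm (p ^ (α - 1))]

theorem weightedRieszKernel_nonneg (hq : 0 ≤ q) (hp : 0 ≤ p) : 0 ≤ weightedRieszKernel α c q p := by
  unfold weightedRieszKernel
  positivity

theorem weightedRieszKernel_of_le (hpq : p ≤ q) :
    weightedRieszKernel α c q p = q ^ (α - 1) * (p ^ (α - 1) * (q - p) ^ c) := by
  rw [weightedRieszKernel, abs_sub_comm, abs_of_nonneg (sub_nonneg.2 hpq)]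
  ring

theorem measurable_uncurry_weightedRieszKernel (α c : ℝ) :
    Measurable (uncurry (weightedRieszKernel α c)) := by
  unfold weightedRieszKernel
  fun_prop

theorem intervalIntegrable_weightedRieszKernel (hα : 0 < α) (hc : -1 < c) (hq : 0 < q) :
    IntervalIntegrable (weightedRieszKernel α c q) volume 0 q :=
  ((intervalIntegrable_rpow_mul_sub_rpow hα hc hq).const_mul (q ^ (α - 1))).congr fun _ hp ↦
    (weightedRieszKernel_of_le (uIoc_of_le hq.le ▸ hp).2).symm

theorem integral_weightedRieszKernel (hα : 0 < α) (hc : -1 < c) (hq : 0 < q) :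
    ∫ p in (0 : ℝ)..q, weightedRieszKernel α c q p = beta α (c + 1) * q ^ (2 * α + c - 1) := calc
  _ = ∫ p in (0 : ℝ)..q, q ^ (α - 1) * (p ^ (α - 1) * (q - p) ^ c) :=
    integral_congr_Ioo_of_le hq.le fun _ hp ↦ weightedRieszKernel_of_le hp.2.le
  _ = q ^ (α - 1) * (q ^ (α + c) * beta α (c + 1)) := by
    rw [intervalIntegral.integral_const_mul, integral_rpow_mul_sub_rpow hα hc hq]
  _ = beta α (c + 1) * q ^ (2 * α + c - 1) := by
    rw [← mul_assoc, ← rpow_add hq, mul_comm]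
    ring_nf

theorem integral_norm_weightedRieszKernel (hα : 0 < α) (hc : -1 < c) (hq : 0 < q) :
    ∫ p in (0 : ℝ)..q, ‖weightedRieszKernel α c q p‖ =
      beta α (c + 1) * q ^ (2 * α + c - 1) := by
  rw [← integral_weightedRieszKernel hα hc hq]
  exact integral_congr_Ioo_of_le hq.le fun _ hp ↦
    norm_of_nonneg (weightedRieszKernel_nonneg hq.le hp.1.le)

theorem integral_integral_weightedRieszKernel (hα : 0 < α) (hc : -1 < c) (hαc : 0 < 2 * α + c)
    (ht : 0 ≤ t) :
    ∫ q in (0 : ℝ)..t, ∫ p in (0 : ℝ)..t, weightedRieszKernel α c q p =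
      2 * beta α (c + 1) / (2 * α + c) * t ^ (2 * α + c) := by
  have hnorm : IntervalIntegrable (fun q ↦ ∫ p in (0 : ℝ)..q, ‖weightedRieszKernel α c q p‖)
      volume 0 t :=
    ((intervalIntegrable_rpow' (by linarith)).const_mul _).congr fun _ hq ↦
      (integral_norm_weightedRieszKernel hα hc (uIoc_of_le ht ▸ hq).1).symm
  calc ∫ q in (0 : ℝ)..t, ∫ p in (0 : ℝ)..t, weightedRieszKernel α c q p
      = 2 * ∫ q in (0 : ℝ)..t, ∫ p in (0 : ℝ)..q, weightedRieszKernel α c q p :=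
        intervalIntegral_intervalIntegral_eq_two_smul_of_symmetric ht (weightedRieszKernel_comm α c)
          (measurable_uncurry_weightedRieszKernel α c).aestronglyMeasurable
          (fun _ hq ↦ intervalIntegrable_weightedRieszKernel hα hc hq.1) hnorm
    _ = 2 * ∫ q in (0 : ℝ)..t, beta α (c + 1) * q ^ (2 * α + c - 1) := by
        rw [integral_congr_Ioo_of_le ht fun _ hq ↦ integral_weightedRieszKernel hα hc hq.1]
    _ = 2 * beta α (c + 1) / (2 * α + c) * t ^ (2 * α + c) := by
        rw [intervalIntegral.integral_const_mul, integral_rpow (.inl (by linarith)), sub_add_cancel,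
          zero_rpow hαc.ne']
        ring

end DoubleIntegral

theorem double_integral_eval_general (α H : ℝ) (hα : 0 < α) (hH0 : 1 / 2 < H) (hαH : 1 < α + H) :
    ∃ S : ℝ, HasSum (fun n : ℕ ↦ genBinom (2 * H - 2) n * (-1 : ℝ) ^ n / (α + n)) S ∧
      ∀ t : ℝ, 0 < t →
        ∫ q in (0 : ℝ)..t, ∫ p in (0 : ℝ)..t,
            p ^ (α - 1) * q ^ (α - 1) * |p - q| ^ (2 * H - 2) =
          2 * S / (2 * α + 2 * H - 2) * t ^ (2 * α + 2 * H - 2) := by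
  have hc : -1 < 2 * H - 2 := by linarith
  refine ⟨_, hasSum_genBinom_div hα hc, fun t ht ↦ ?_⟩
  rw [add_sub_assoc]
  exact integral_integral_weightedRieszKernel hα hc (by linarith) ht.le

theorem double_integral_eval (α H : ℝ) (hα : 0 < α) (hH0 : 1/2 < H) (hH1 : H < 1)
    (hαH : 1 < α + H) :
    ∃ S : ℝ, HasSum (fun n : ℕ => genBinom (2*H - 2) n * (-1 : ℝ) ^ n / (α + n)) S ∧
      ∀ t : ℝ, 0 < t →
        (∫ q in (0:ℝ)..t, ∫ p in (0:ℝ)..t, p ^ (α - 1) * q ^ (α - 1) * |p - q| ^ (2*H - 2))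
          = (2 * S / (2*α + 2*H - 2)) * t ^ (2*α + 2*H - 2) :=
  double_integral_eval_general α H hα hH0 hαH
end

section
/- Let 0 < α ≤ 1, T > 0, and let h : (0,T) → ℝ be measurable with |h(τ)| ≤ M for almost every τ ∈ (0,T). Then for every λ > 0, |∫_0^T (T-τ)^{α-1} E_{α,α}(-λ (T-τ)^α) h(τ) dτ| ≤ M/λ. -/
open Real MeasureTheory intervalIntegral

/-!
Write `g_β(t) = t^(β-1) / Γ(β)` for the Riemann–Liouville kernels, which satisfy
`g_α * g_β = g_(α+β)`. Expanding `k(t) = t^(α-1) E_{α,α}(-λ t^α) = ∑ (-λ)^n g_(nα+α)(t)` and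
convolving term by term gives `k + λ (g_α * k) = g_α`, so `k` is the Volterra resolvent of `g_α`.
For `α ≤ 1` the kernel `g_α` is log-convex, and resolvents of log-convex kernels cannot change sign:
at a first zero `u` of `k`, comparing the equation at `u` with the equation at `t < u` bounds `k(t)`
by its own integral over `(t, u)`, which forces `k ≤ 0` just before `u`. Finally, `g_α` is
decreasing, so `λ g_α(T) ∫₀ᵀ k ≤ λ (g_α * k)(T) = g_α(T) - k(T) ≤ g_α(T)`, that is
`∫₀ᵀ k ≤ 1/λ`.
-/

section

open Set Filter Topology

theorem Gamma_mul_sub_one_rpow_le {α x : ℝ} (hα : 0 < α) (hx : 1 < x) :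
    Gamma x * (x - 1) ^ α ≤ Gamma (x + α) := by
  have hα' : 0 < 1 + α := by linarith
  have hg₀ : 0 < Gamma (x - 1) := Gamma_pos_of_pos (by linarith)
  have hg₁ : 0 < Gamma (x + α) := Gamma_pos_of_pos (by linarith)
  have hg : 0 < Gamma x := Gamma_pos_of_pos (by linarith)
  have hrec : Gamma x = (x - 1) * Gamma (x - 1) := by
    simpa using Gamma_add_one (s := x - 1) (by linarith)
  have hconvex : Gamma x ≤
      Gamma (x + α) ^ (1 / (1 + α)) * Gamma (x - 1) ^ (α / (1 + α)) := by
    convert Gamma_mul_add_mul_le_rpow_Gamma_mul_rpow_Gamma (s := x + α) (t := x - 1)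
      (a := 1 / (1 + α)) (b := α / (1 + α)) (by linarith) (by linarith) (by positivity)
      (by positivity) (by field_simp) using 2
    field_simp
    ring
  have hpow : Gamma x * Gamma x ^ α ≤ Gamma (x + α) * Gamma (x - 1) ^ α := by
    have h := rpow_le_rpow hg.le hconvex hα'.le
    rwa [mul_rpow (by positivity) (by positivity), ← rpow_mul hg₁.le, ← rpow_mul hg₀.le,
      div_mul_cancel₀ _ hα'.ne', div_mul_cancel₀ _ hα'.ne', rpow_one, rpow_add hg, rpow_one] at h
  refine le_of_mul_le_mul_right ?_ (rpow_pos_of_pos hg₀ α)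
  rwa [mul_assoc, ← mul_rpow (by linarith) hg₀.le, ← hrec]

theorem summable_mittagLeffler {α : ℝ} (hα : 0 < α) (β x : ℝ) :
    Summable fun k : ℕ => x ^ k / Gamma (k * α + β) := by
  have harg : Tendsto (fun k : ℕ => (k : ℝ) * α + β) atTop atTop :=
    tendsto_atTop_add_const_right _ _ (tendsto_natCast_atTop_atTop.atTop_mul_const hα)
  have hgrowth : Tendsto (fun k : ℕ => ((k : ℝ) * α + β - 1) ^ α) atTop atTop :=
    (tendsto_rpow_atTop hα).comp (tendsto_atTop_add_const_right _ (-1) harg)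
  refine summable_of_ratio_norm_eventually_le (r := 1 / 2) (by norm_num) ?_
  filter_upwards [hgrowth.eventually_ge_atTop (2 * |x|), harg.eventually_gt_atTop 1] with k hk hk₁
  have hsucc : ((k + 1 : ℕ) : ℝ) * α + β = k * α + β + α := by push_cast; ring
  have hG : 0 < Gamma (k * α + β) := Gamma_pos_of_pos (by linarith)
  have hG' : 0 < Gamma (k * α + β + α) := Gamma_pos_of_pos (by linarith)
  have hratio : Gamma (k * α + β) * (2 * |x|) ≤ Gamma (k * α + β + α) :=
    (mul_le_mul_of_nonneg_left hk hG.le).trans (Gamma_mul_sub_one_rpow_le hα hk₁)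
  rw [hsucc]
  simp only [norm_eq_abs, abs_div, abs_pow, abs_of_pos hG, abs_of_pos hG']
  rw [div_le_iff₀ hG']
  calc |x| ^ (k + 1) = 1 / 2 * (|x| ^ k / Gamma (k * α + β)) *
        (Gamma (k * α + β) * (2 * |x|)) := by field_simp; ring
    _ ≤ _ := by gcongr

theorem continuous_mittagLeffler {α : ℝ} (hα : 0 < α) (β : ℝ) :
    Continuous (mittagLeffler α β) := by
  refine continuous_iff_continuousAt.2 fun x => ?_
  have hball : ContinuousOn (mittagLeffler α β) (Metric.ball 0 (|x| + 1)) := by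
    refine continuousOn_tsum (fun k => by fun_prop)
      (summable_mittagLeffler hα β (|x| + 1)).norm fun k y hy => ?_
    have hy' : |y| ≤ |(|x| + 1)| := by
      simpa [abs_of_nonneg (by positivity : 0 ≤ |x| + 1)] using (Metric.mem_ball.1 hy).le
    simp only [norm_eq_abs, abs_div, abs_pow]
    gcongr
  exact hball.continuousAt (Metric.isOpen_ball.mem_nhds (by simp))

theorem mittagLeffler_eq_inv_Gamma_add {α : ℝ} (hα : 0 < α) (β x : ℝ) :
    mittagLeffler α β x = 1 / Gamma β + x * mittagLeffler α (α + β) x := by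
  rw [mittagLeffler, (summable_mittagLeffler hα β x).tsum_eq_zero_add, mittagLeffler,
    ← tsum_mul_left]
  congr 1
  · simp
  · refine tsum_congr fun k => ?_
    rw [show ((k + 1 : ℕ) : ℝ) * α + β = k * α + (α + β) by push_cast; ring]
    ring

/-- The Riemann–Liouville kernel `t ^ (β - 1) / Γ(β)`; convolution with it is the fractional
integral of order `β`. -/
noncomputable def riemannLiouvilleKernel (β t : ℝ) : ℝ :=
  t ^ (β - 1) / Gamma β

theorem riemannLiouvilleKernel_nonneg {β t : ℝ} (hβ : 0 < β) (ht : 0 ≤ t) :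
    0 ≤ riemannLiouvilleKernel β t :=
  div_nonneg (rpow_nonneg ht _) (Gamma_pos_of_pos hβ).le

theorem riemannLiouvilleKernel_pos {β t : ℝ} (hβ : 0 < β) (ht : 0 < t) :
    0 < riemannLiouvilleKernel β t :=
  div_pos (rpow_pos_of_pos ht _) (Gamma_pos_of_pos hβ)

theorem antitoneOn_riemannLiouvilleKernel {β : ℝ} (hβ : 0 < β) (hβ₁ : β ≤ 1) :
    AntitoneOn (riemannLiouvilleKernel β) (Ioi 0) := fun _ hs _ _ hst =>
  div_le_div_of_nonneg_right (rpow_le_rpow_of_nonpos hs hst (by linarith))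
    (Gamma_pos_of_pos hβ).le

theorem convexOn_log_riemannLiouvilleKernel {β : ℝ} (hβ : 0 < β) (hβ₁ : β ≤ 1) :
    ConvexOn ℝ (Ioi 0) fun t => log (riemannLiouvilleKernel β t) := by
  have hconv : ConvexOn ℝ (Ioi 0) fun t => (1 - β) * -log t + -log (Gamma β) :=
    (strictConcaveOn_log_Ioi.concaveOn.neg.smul (by linarith : 0 ≤ 1 - β)).add_const _
  refine hconv.congr fun t ht => ?_
  simp only [riemannLiouvilleKernel]
  rw [log_div (rpow_pos_of_pos ht _).ne' (Gamma_pos_of_pos hβ).ne', log_rpow ht]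
  ring

theorem intervalIntegrable_riemannLiouvilleKernel {β : ℝ} (hβ : 0 < β) (a b : ℝ) :
    IntervalIntegrable (riemannLiouvilleKernel β) volume a b :=
  (intervalIntegrable_rpow' (by linarith)).div_const _

theorem integral_rpow_mul_rpow_comp_sub {a b t : ℝ} (ha : 0 < a) (hb : 0 < b) (ht : 0 < t) :
    ∫ s in (0 : ℝ)..t, (t - s) ^ (a - 1) * s ^ (b - 1) =
      t ^ (a + b - 1) * (Gamma a * Gamma b / Gamma (a + b)) := by
  apply Complex.ofReal_injective
  rw [← intervalIntegral.integral_ofReal]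
  calc ∫ s in (0 : ℝ)..t, (((t - s) ^ (a - 1) * s ^ (b - 1) : ℝ) : ℂ)
      = ∫ s in (0 : ℝ)..t, (s : ℂ) ^ ((b : ℂ) - 1) * ((t : ℂ) - s) ^ ((a : ℂ) - 1) := by
        refine intervalIntegral.integral_congr fun s hs => ?_
        rw [uIcc_of_le ht.le] at hs
        rw [Complex.ofReal_mul, Complex.ofReal_cpow (by linarith [hs.2]),
          Complex.ofReal_cpow hs.1]
        push_cast
        ring
    _ = _ := by
        rw [Complex.betaIntegral_scaled (b : ℂ) (a : ℂ) ht,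
          Complex.betaIntegral_eq_Gamma_mul_div _ _ (by simpa) (by simpa)]
        push_cast [Complex.ofReal_cpow ht.le, ← Complex.Gamma_ofReal]
        rw [add_comm (b : ℂ), mul_comm (Complex.Gamma b)]

theorem integral_riemannLiouvilleKernel_conv {a b t : ℝ} (ha : 0 < a) (hb : 0 < b) (ht : 0 < t) :
    ∫ s in (0 : ℝ)..t, riemannLiouvilleKernel a (t - s) * riemannLiouvilleKernel b s =
      riemannLiouvilleKernel (a + b) t := by
  have hGa := (Gamma_pos_of_pos ha).ne'
  have hGb := (Gamma_pos_of_pos hb).ne'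
  simp only [riemannLiouvilleKernel, div_mul_div_comm]
  rw [intervalIntegral.integral_div, integral_rpow_mul_rpow_comp_sub ha hb ht]
  field_simp

theorem intervalIntegrable_riemannLiouvilleKernel_conv {a b t : ℝ} (ha : 0 < a) (hb : 0 < b)
    (ht : 0 < t) :
    IntervalIntegrable (fun s => riemannLiouvilleKernel a (t - s) * riemannLiouvilleKernel b s)
      volume 0 t := by
  apply intervalIntegrable_of_integral_ne_zero
  rw [integral_riemannLiouvilleKernel_conv ha hb ht]
  exact (riemannLiouvilleKernel_pos (add_pos ha hb) ht).ne'

/-- The Mittag-Leffler kernel `t ^ (β - 1) * E_{α,β}(z t ^ α)`; for `β = α` and `z = -λ` it is the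
kernel of the solution formula for the fractional relaxation equation. -/
noncomputable def mittagLefflerKernel (α β z t : ℝ) : ℝ :=
  t ^ (β - 1) * mittagLeffler α β (z * t ^ α)

theorem rpow_mul_pow_div_Gamma {t : ℝ} (ht : 0 < t) (α β z : ℝ) (n : ℕ) :
    t ^ (β - 1) * ((z * t ^ α) ^ n / Gamma (n * α + β)) =
      z ^ n * riemannLiouvilleKernel (n * α + β) t := by
  rw [riemannLiouvilleKernel, show (n : ℝ) * α + β - 1 = (β - 1) + α * n by ring,
    rpow_add ht, rpow_mul ht.le, rpow_natCast, mul_pow]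
  ring

theorem hasSum_mittagLefflerKernel {α t : ℝ} (hα : 0 < α) (ht : 0 < t) (β z : ℝ) :
    HasSum (fun n : ℕ => z ^ n * riemannLiouvilleKernel (n * α + β) t)
      (mittagLefflerKernel α β z t) := by
  simp only [← rpow_mul_pow_div_Gamma ht]
  exact (summable_mittagLeffler hα β _).hasSum.mul_left _

theorem mittagLefflerKernel_eq_add {α t : ℝ} (hα : 0 < α) (ht : 0 < t) (β z : ℝ) :
    mittagLefflerKernel α β z t =
      riemannLiouvilleKernel β t + z * mittagLefflerKernel α (α + β) z t := by
  simp only [mittagLefflerKernel, riemannLiouvilleKernel]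
  rw [mittagLeffler_eq_inv_Gamma_add hα, show α + β - 1 = (β - 1) + α by ring, rpow_add ht]
  ring

theorem continuous_mittagLeffler_comp_rpow {α : ℝ} (hα : 0 < α) (β z : ℝ) :
    Continuous fun t : ℝ => mittagLeffler α β (z * t ^ α) :=
  (continuous_mittagLeffler hα β).comp (continuous_const.mul (continuous_rpow_const hα.le))

theorem continuousOn_mittagLefflerKernel {α : ℝ} (hα : 0 < α) (β z : ℝ) :
    ContinuousOn (mittagLefflerKernel α β z) (Ioi 0) :=
  (continuousOn_id.rpow_const fun _ ht => Or.inl (ne_of_gt ht)).mul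
    (continuous_mittagLeffler_comp_rpow hα β z).continuousOn

theorem intervalIntegrable_mittagLefflerKernel {α β : ℝ} (hα : 0 < α) (hβ : 0 < β) (z a b : ℝ) :
    IntervalIntegrable (mittagLefflerKernel α β z) volume a b :=
  (intervalIntegrable_rpow' (by linarith)).mul_continuousOn
    (continuous_mittagLeffler_comp_rpow hα β z).continuousOn

theorem eventually_mittagLefflerKernel_pos {α β : ℝ} (hα : 0 < α) (hβ : 0 < β) (z : ℝ) :
    ∀ᶠ t in 𝓝[>] 0, 0 < mittagLefflerKernel α β z t := by
  have hzero : 0 < mittagLeffler α β (z * 0 ^ α) := by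
    rw [zero_rpow hα.ne', mul_zero, mittagLeffler_eq_inv_Gamma_add hα, zero_mul, add_zero]
    exact one_div_pos.2 (Gamma_pos_of_pos hβ)
  have hnear : ∀ᶠ t in 𝓝[>] (0 : ℝ), 0 < mittagLeffler α β (z * t ^ α) :=
    nhdsWithin_le_nhds
      ((continuous_mittagLeffler_comp_rpow hα β z).continuousAt.eventually_const_lt hzero)
  filter_upwards [hnear, self_mem_nhdsWithin] with t ht ht₀
  exact mul_pos (rpow_pos_of_pos ht₀ _) ht

theorem intervalIntegrable_riemannLiouvilleKernel_conv_mittagLefflerKernel {α β γ t : ℝ}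
    (hα : 0 < α) (hβ : 0 < β) (hγ : 0 < γ) (ht : 0 < t) (z : ℝ) :
    IntervalIntegrable (fun s => riemannLiouvilleKernel γ (t - s) * mittagLefflerKernel α β z s)
      volume 0 t := by
  have hG := (Gamma_pos_of_pos hβ).ne'
  refine ((intervalIntegrable_riemannLiouvilleKernel_conv hγ hβ ht).mul_continuousOn
    (continuous_const.mul (continuous_mittagLeffler_comp_rpow hα β z)).continuousOn
      (g := fun s => Gamma β * mittagLeffler α β (z * s ^ α))).congr fun s _ => ?_
  simp only [riemannLiouvilleKernel, mittagLefflerKernel]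
  field_simp

theorem integral_riemannLiouvilleKernel_conv_mittagLefflerKernel {α β γ t : ℝ}
    (hα : 0 < α) (hβ : 0 < β) (hγ : 0 < γ) (ht : 0 < t) (z : ℝ) :
    ∫ s in (0 : ℝ)..t, riemannLiouvilleKernel γ (t - s) * mittagLefflerKernel α β z s =
      mittagLefflerKernel α (γ + β) z t := by
  let F (n : ℕ) (s : ℝ) : ℝ :=
    riemannLiouvilleKernel γ (t - s) * riemannLiouvilleKernel (n * α + β) s
  have hexp (n : ℕ) : 0 < n * α + β := by positivity
  have hF_nonneg (n : ℕ) {s : ℝ} (hs : s ∈ Ioc 0 t) : 0 ≤ F n s :=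
    mul_nonneg (riemannLiouvilleKernel_nonneg hγ (by linarith [hs.2]))
      (riemannLiouvilleKernel_nonneg (hexp n) hs.1.le)
  have hF_integral (n : ℕ) :
      ∫ s in Ioc 0 t, F n s = riemannLiouvilleKernel (n * α + (γ + β)) t := by
    rw [← intervalIntegral.integral_of_le ht.le,
      integral_riemannLiouvilleKernel_conv hγ (hexp n) ht, add_left_comm]
  have hF_integrable (n : ℕ) : IntegrableOn (F n) (Ioc 0 t) :=
    (intervalIntegrable_iff_integrableOn_Ioc_of_le ht.le).1
      (intervalIntegrable_riemannLiouvilleKernel_conv hγ (hexp n) ht)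
  have hnorm (n : ℕ) : ∫ s in Ioc 0 t, ‖z ^ n * F n s‖ =
      |z| ^ n * riemannLiouvilleKernel (n * α + (γ + β)) t := by
    rw [← hF_integral, ← MeasureTheory.integral_const_mul]
    refine setIntegral_congr_fun measurableSet_Ioc fun s hs => ?_
    simp only [norm_mul, norm_pow, norm_eq_abs, abs_of_nonneg (hF_nonneg n hs)]
  have hsum := hasSum_integral_of_summable_integral_norm
    (fun n => (hF_integrable n).const_mul (z ^ n))
    (by simpa only [hnorm] using (hasSum_mittagLefflerKernel hα ht (γ + β) |z|).summable)
  simp only [MeasureTheory.integral_const_mul, hF_integral] at hsum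
  rw [(hasSum_mittagLefflerKernel hα ht (γ + β) z).unique hsum,
    intervalIntegral.integral_of_le ht.le]
  refine setIntegral_congr_fun measurableSet_Ioc fun s hs => ?_
  rw [← (hasSum_mittagLefflerKernel hα hs.1 β z).tsum_eq, ← tsum_mul_left]
  exact tsum_congr fun n => mul_left_comm _ _ _

theorem exists_first_nonpos {f : ℝ → ℝ} {a b : ℝ} (hab : a < b) (hf : ContinuousOn f (Ioc a b))
    (hfa : ∀ᶠ t in 𝓝[>] a, 0 < f t) (hfb : f b ≤ 0) :
    ∃ c ∈ Ioc a b, f c ≤ 0 ∧ ∀ t ∈ Ioo a c, 0 < f t := by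
  obtain ⟨d, had, hd⟩ := (mem_nhdsGT_iff_exists_Ioo_subset).1 hfa
  have hdb : d ≤ b := by
    by_contra! hbd
    exact hfb.not_gt (hd ⟨hab, hbd⟩)
  have hcompact : IsCompact (Icc d b ∩ f ⁻¹' Iic 0) :=
    isCompact_Icc.of_isClosed_subset
      ((hf.mono ((Icc_subset_Ioc_iff hdb).2 ⟨had, le_rfl⟩)).preimage_isClosed_of_isClosed
        isClosed_Icc isClosed_Iic) inter_subset_left
  obtain ⟨c, ⟨⟨hdc, hcb⟩, hfc⟩, hleast⟩ := hcompact.exists_isLeast ⟨b, ⟨hdb, le_rfl⟩, hfb⟩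
  refine ⟨c, ⟨lt_of_lt_of_le had hdc, hcb⟩, hfc, fun t ht => ?_⟩
  by_contra! hft
  have hdt : d ≤ t := by
    by_contra! htd
    exact hft.not_gt (hd ⟨ht.1, htd⟩)
  exact ht.2.not_ge (hleast ⟨⟨hdt, ht.2.le.trans hcb⟩, hft⟩)

theorem eventually_nonpos_of_le_integral_mul {f K : ℝ → ℝ} {a b : ℝ} (hab : a < b)
    (hf : ContinuousOn f (Icc a b)) (hK : IntervalIntegrable K volume a b)
    (hK_nonneg : ∀ s ∈ Ioo a b, 0 ≤ K s)
    (hle : ∀ t ∈ Icc a b, f t ≤ ∫ s in t..b, K s * f s) :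
    ∀ᶠ t in 𝓝[<] b, f t ≤ 0 := by
  have htail : Tendsto (fun t => ∫ s in t..b, K s) (𝓝[<] b) (𝓝 0) := by
    have hK_on : IntegrableOn K (uIcc a b) := (intervalIntegrable_iff' (by simp)).1 hK
    have hcont := continuousOn_primitive_interval_left hK_on b right_mem_uIcc
    rw [ContinuousWithinAt, integral_same, uIcc_of_le hab.le] at hcont
    exact hcont.mono_left (nhdsWithin_le_of_mem (Icc_mem_nhdsLT hab))
  have hsmall : ∀ᶠ t in 𝓝[<] b, a < t ∧ ∫ s in t..b, K s < 1 :=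
    (eventually_nhdsWithin_of_eventually_nhds (eventually_gt_nhds hab)).and
      (htail.eventually_lt_const one_pos)
  obtain ⟨c, hcb, hc⟩ := mem_nhdsLT_iff_exists_Ioo_subset.1 hsmall
  filter_upwards [Ioo_mem_nhdsLT hcb] with t ht
  obtain ⟨hat, -⟩ := hc ht
  obtain ⟨u, hu, hmax⟩ := isCompact_Icc.exists_isMaxOn ⟨t, left_mem_Icc.2 ht.2.le⟩
    (hf.mono (Icc_subset_Icc_left hat.le))
  refine (hmax (left_mem_Icc.2 ht.2.le)).trans ?_
  have hu' : u ∈ Icc a b := ⟨hat.le.trans hu.1, hu.2⟩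
  by_contra! hfu
  rcases hu.2.eq_or_lt with rfl | hub
  · exact hfu.not_ge (by simpa using hle u hu')
  have hKu : IntervalIntegrable K volume u b :=
    hK.mono_set (uIcc_subset_uIcc_right (Icc_subset_uIcc hu'))
  have hfu_lt : f u < f u :=
    calc f u ≤ ∫ s in u..b, K s * f s := hle u hu'
      _ ≤ ∫ s in u..b, K s * f u := by
        refine integral_mono_on_of_le_Ioo hub.le (hKu.mul_continuousOn ?_) (hKu.mul_const _)
          fun s hs => mul_le_mul_of_nonneg_left (hmax ⟨hu.1.trans hs.1.le, hs.2.le⟩)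
            (hK_nonneg s ⟨hu'.1.trans_lt hs.1, hs.2⟩)
        exact hf.mono (by rw [uIcc_of_le hub.le]; exact Icc_subset_Icc_left hu'.1)
      _ = (∫ s in u..b, K s) * f u := intervalIntegral.integral_mul_const _ _
      _ < 1 * f u := mul_lt_mul_of_pos_right (hc ⟨ht.1.trans_le hu.1, hub⟩).2 hfu
      _ = f u := one_mul _
  exact hfu_lt.false

/-- `k` is the resolvent of the Volterra kernel `a` with parameter `lam`, that is
`k + lam • (a * k) = a` on `(0, ∞)` for the one-sided convolution `*`. Integrability is part of the
notion because the integral of a non-integrable function is `0`. -/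
structure IsVolterraResolvent (lam : ℝ) (a k : ℝ → ℝ) : Prop where
  intervalIntegrable_conv :
    ∀ t, 0 < t → IntervalIntegrable (fun s => a (t - s) * k s) volume 0 t
  add_conv_eq : ∀ t, 0 < t → k t + lam * ∫ s in (0 : ℝ)..t, a (t - s) * k s = a t

theorem isVolterraResolvent_mittagLefflerKernel {α : ℝ} (hα : 0 < α) (lam : ℝ) :
    IsVolterraResolvent lam (riemannLiouvilleKernel α) (mittagLefflerKernel α α (-lam)) where
  intervalIntegrable_conv _ ht :=
    intervalIntegrable_riemannLiouvilleKernel_conv_mittagLefflerKernel hα hα hα ht _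
  add_conv_eq _ ht := by
    rw [integral_riemannLiouvilleKernel_conv_mittagLefflerKernel hα hα hα ht,
      mittagLefflerKernel_eq_add hα ht α]
    ring

theorem convexOn_map_add_map_le {S : Set ℝ} {f : ℝ → ℝ} (hf : ConvexOn ℝ S f) {x y p q : ℝ}
    (hx : x ∈ S) (hy : y ∈ S) (hp : p ∈ Icc x y) (hpq : p + q = x + y) :
    f p + f q ≤ f x + f y := by
  rw [← segment_eq_Icc (hp.1.trans hp.2)] at hp
  obtain ⟨v, w, hv, hw, hvw, rfl⟩ := hp
  obtain rfl : q = w • x + v • y := by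
    simp only [smul_eq_mul] at hpq ⊢
    linear_combination hpq - (x + y) * hvw
  have hp_le := hf.2 hx hy hv hw hvw
  have hq_le := hf.2 hx hy hw hv (by rwa [add_comm])
  simp only [smul_eq_mul] at hp_le hq_le ⊢
  linear_combination hp_le + hq_le + (f x + f y) * hvw

theorem continuousOn_of_convexOn_log {S : Set ℝ} (hS : IsOpen S) {a : ℝ → ℝ}
    (ha : ∀ t ∈ S, 0 < a t) (hconv : ConvexOn ℝ S fun t => log (a t)) : ContinuousOn a S :=
  (hconv.continuousOn hS).rexp.congr fun t ht => (exp_log (ha t ht)).symm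

theorem mul_le_mul_of_convexOn_log {a : ℝ → ℝ} (ha : ∀ t, 0 < t → 0 < a t)
    (hconv : ConvexOn ℝ (Ioi 0) fun t => log (a t)) {s t u : ℝ} (hs : s ∈ Ioo 0 t) (htu : t < u) :
    a t * a (u - s) ≤ a u * a (t - s) := by
  have ht : 0 < t := hs.1.trans hs.2
  have hts : 0 < t - s := sub_pos.2 hs.2
  have hat := ha t ht
  have hau := ha u (ht.trans htu)
  have hats := ha (t - s) hts
  have haus := ha (u - s) (by linarith)
  rw [← log_le_log_iff (mul_pos hat haus) (mul_pos hau hats), log_mul hat.ne' haus.ne',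
    log_mul hau.ne' hats.ne', add_comm (log (a u))]
  exact convexOn_map_add_map_le hconv hts (ht.trans htu) ⟨by linarith [hs.1], htu.le⟩ (by ring)

namespace IsVolterraResolvent

variable {lam : ℝ} {a k : ℝ → ℝ}

theorem mul_le_integral_of_nonneg (hk : IsVolterraResolvent lam a k) (hlam : 0 ≤ lam)
    (ha : ∀ t, 0 < t → 0 < a t) (hconv : ConvexOn ℝ (Ioi 0) fun t => log (a t)) {t u : ℝ}
    (ht : 0 < t) (htu : t < u) (hk_nonneg : ∀ s ∈ Ioo 0 t, 0 ≤ k s) (hku : k u ≤ 0) :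
    a u * k t ≤ lam * (a t * ∫ s in t..u, a (u - s) * k s) := by
  have hu : 0 < u := ht.trans htu
  have ht_mem : t ∈ uIcc 0 u := Icc_subset_uIcc ⟨ht.le, htu.le⟩
  have hint_left : IntervalIntegrable (fun s => a (u - s) * k s) volume 0 t :=
    (hk.intervalIntegrable_conv u hu).mono_set (uIcc_subset_uIcc_left ht_mem)
  have hint_right : IntervalIntegrable (fun s => a (u - s) * k s) volume t u :=
    (hk.intervalIntegrable_conv u hu).mono_set (uIcc_subset_uIcc_right ht_mem)
  have hcompare : a t * ∫ s in (0 : ℝ)..t, a (u - s) * k s ≤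
      a u * ∫ s in (0 : ℝ)..t, a (t - s) * k s := by
    rw [← intervalIntegral.integral_const_mul, ← intervalIntegral.integral_const_mul]
    refine integral_mono_on_of_le_Ioo ht.le (hint_left.const_mul _)
      ((hk.intervalIntegrable_conv t ht).const_mul _) fun s hs => ?_
    rw [← mul_assoc, ← mul_assoc]
    exact mul_le_mul_of_nonneg_right (mul_le_mul_of_convexOn_log ha hconv hs htu) (hk_nonneg s hs)
  have heq_t := hk.add_conv_eq t ht
  have heq_u := hk.add_conv_eq u hu
  rw [← integral_add_adjacent_intervals hint_left hint_right] at heq_u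
  linear_combination a u * heq_t - a t * heq_u + lam * hcompare +
    mul_nonpos_of_nonneg_of_nonpos (ha t ht).le hku

theorem eventually_nonpos_left (hk : IsVolterraResolvent lam a k) (hlam : 0 ≤ lam)
    (ha : ∀ t, 0 < t → 0 < a t) (hconv : ConvexOn ℝ (Ioi 0) fun t => log (a t))
    (ha_int : ∀ t, 0 < t → IntervalIntegrable a volume 0 t) (hk_cont : ContinuousOn k (Ioi 0))
    {u : ℝ} (hu : 0 < u) (hk_nonneg : ∀ s ∈ Ioo 0 u, 0 ≤ k s) (hku : k u ≤ 0) :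
    ∀ᶠ t in 𝓝[<] u, k t ≤ 0 := by
  have ha_cont := continuousOn_of_convexOn_log isOpen_Ioi ha hconv
  have hau : 0 < a u := ha u hu
  have hhalf : u / 2 < u := half_lt_self hu
  have hIcc : Icc (u / 2) u ⊆ Ioi 0 := fun s hs => (half_pos hu).trans_le hs.1
  have hK_int : IntervalIntegrable (fun s => lam / a u * (a (u - s) * a s)) volume (u / 2) u := by
    have hrefl : IntervalIntegrable (fun s => a (u - s)) volume (u / 2) u := by
      have h := ((ha_int (u / 2) (half_pos hu)).comp_sub_left u).symm
      rwa [sub_half, sub_zero] at h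
    exact (hrefl.mul_continuousOn (ha_cont.mono (by rwa [uIcc_of_le hhalf.le]))).const_mul _
  have hK_nonneg (s : ℝ) (hs : s ∈ Ioo (u / 2) u) : 0 ≤ lam / a u * (a (u - s) * a s) :=
    mul_nonneg (div_nonneg hlam hau.le)
      (mul_pos (ha _ (sub_pos.2 hs.2)) (ha s (hIcc (Ioo_subset_Icc_self hs)))).le
  -- Dividing `k` by `a` removes the factor `a t` in front of the integral bounding `k t`.
  have hle (t : ℝ) (ht : t ∈ Icc (u / 2) u) :
      k t / a t ≤ ∫ s in t..u, lam / a u * (a (u - s) * a s) * (k s / a s) := by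
    have hat : 0 < a t := ha t (hIcc ht)
    rcases ht.2.eq_or_lt with rfl | htu
    · simpa using div_nonpos_of_nonpos_of_nonneg hku hat.le
    have hcancel : ∫ s in t..u, lam / a u * (a (u - s) * a s) * (k s / a s) =
        lam / a u * ∫ s in t..u, a (u - s) * k s := by
      rw [← intervalIntegral.integral_const_mul]
      refine integral_congr fun s hs => ?_
      rw [uIcc_of_le htu.le] at hs
      have has := (ha s (hIcc ⟨ht.1.trans hs.1, hs.2⟩)).ne'
      field_simp
    rw [hcancel, div_mul_eq_mul_div, div_le_div_iff₀ hat hau]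
    linarith [hk.mul_le_integral_of_nonneg hlam ha hconv (hIcc ht) htu
      (fun s hs => hk_nonneg s ⟨hs.1, hs.2.trans htu⟩) hku]
  filter_upwards [eventually_nonpos_of_le_integral_mul hhalf
    ((hk_cont.div ha_cont fun s hs => (ha s hs).ne').mono hIcc) hK_int hK_nonneg hle,
    Ioo_mem_nhdsLT hu] with t hkat ht
  by_contra! hkt
  exact hkat.not_gt (div_pos hkt (ha t ht.1))

theorem pos (hk : IsVolterraResolvent lam a k) (hlam : 0 ≤ lam) (ha : ∀ t, 0 < t → 0 < a t)
    (hconv : ConvexOn ℝ (Ioi 0) fun t => log (a t))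
    (ha_int : ∀ t, 0 < t → IntervalIntegrable a volume 0 t) (hk_cont : ContinuousOn k (Ioi 0))
    (hk_zero : ∀ᶠ t in 𝓝[>] 0, 0 < k t) {t : ℝ} (ht : 0 < t) : 0 < k t := by
  by_contra! hkt
  obtain ⟨u, ⟨hu, -⟩, hku, hpos⟩ :=
    exists_first_nonpos ht (hk_cont.mono Ioc_subset_Ioi_self) hk_zero hkt
  have hnonpos := hk.eventually_nonpos_left hlam ha hconv ha_int hk_cont hu
    (fun s hs => (hpos s hs).le) hku
  obtain ⟨s, hks, hs⟩ := (hnonpos.and (Ioo_mem_nhdsLT hu)).exists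
  exact hks.not_gt (hpos s hs)

theorem integral_le (hk : IsVolterraResolvent lam a k) (hlam : 0 < lam)
    (ha : ∀ t, 0 < t → 0 < a t) (ha_anti : AntitoneOn a (Ioi 0))
    (hk_nonneg : ∀ t, 0 < t → 0 ≤ k t) {t : ℝ} (ht : 0 < t)
    (hk_int : IntervalIntegrable k volume 0 t) :
    ∫ s in (0 : ℝ)..t, k s ≤ 1 / lam := by
  have hcompare : a t * ∫ s in (0 : ℝ)..t, k s ≤ ∫ s in (0 : ℝ)..t, a (t - s) * k s := by
    rw [← intervalIntegral.integral_const_mul]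
    refine integral_mono_on_of_le_Ioo ht.le (hk_int.const_mul _) (hk.intervalIntegrable_conv t ht)
      fun s hs => mul_le_mul_of_nonneg_right ?_ (hk_nonneg s hs.1)
    exact ha_anti (sub_pos.2 hs.2) ht (sub_le_self t hs.1.le)
  rw [le_div_iff₀ hlam]
  refine le_of_mul_le_mul_left ?_ (ha t ht)
  calc a t * ((∫ s in (0 : ℝ)..t, k s) * lam) = lam * (a t * ∫ s in (0 : ℝ)..t, k s) := by ring
    _ ≤ lam * ∫ s in (0 : ℝ)..t, a (t - s) * k s := mul_le_mul_of_nonneg_left hcompare hlam.le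
    _ = a t - k t := by linear_combination hk.add_conv_eq t ht
    _ ≤ a t * 1 := by linarith [hk_nonneg t ht]

end IsVolterraResolvent

theorem mittagLefflerKernel_pos {α lam t : ℝ} (hα : 0 < α) (hα₁ : α ≤ 1) (hlam : 0 ≤ lam)
    (ht : 0 < t) : 0 < mittagLefflerKernel α α (-lam) t :=
  (isVolterraResolvent_mittagLefflerKernel hα lam).pos hlam
    (fun _ => riemannLiouvilleKernel_pos hα) (convexOn_log_riemannLiouvilleKernel hα hα₁)
    (fun _ _ => intervalIntegrable_riemannLiouvilleKernel hα _ _)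
    (continuousOn_mittagLefflerKernel hα α _) (eventually_mittagLefflerKernel_pos hα hα _) ht

theorem integral_mittagLefflerKernel_le {α lam t : ℝ} (hα : 0 < α) (hα₁ : α ≤ 1) (hlam : 0 < lam)
    (ht : 0 < t) : ∫ s in (0 : ℝ)..t, mittagLefflerKernel α α (-lam) s ≤ 1 / lam :=
  (isVolterraResolvent_mittagLefflerKernel hα lam).integral_le hlam
    (fun _ => riemannLiouvilleKernel_pos hα) (antitoneOn_riemannLiouvilleKernel hα hα₁)
    (fun _ hs => (mittagLefflerKernel_pos hα hα₁ hlam.le hs).le) ht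
    (intervalIntegrable_mittagLefflerKernel hα hα _ _ _)

theorem abs_integral_comp_sub_mul_le {k h : ℝ → ℝ} {M T : ℝ} (hT : 0 ≤ T)
    (hk : IntervalIntegrable k volume 0 T) (hk_nonneg : ∀ s ∈ Ioo 0 T, 0 ≤ k s)
    (hh : ∀ᵐ τ ∂(volume.restrict (Ioo 0 T)), |h τ| ≤ M) :
    |∫ τ in (0 : ℝ)..T, k (T - τ) * h τ| ≤ (∫ s in (0 : ℝ)..T, k s) * M := by
  have hk_refl : IntegrableOn (fun τ => k (T - τ)) (Ioo 0 T) := by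
    rw [← intervalIntegrable_iff_integrableOn_Ioo_of_le hT]
    simpa using (hk.comp_sub_left T).symm
  calc |∫ τ in (0 : ℝ)..T, k (T - τ) * h τ| = ‖∫ τ in Ioo 0 T, k (T - τ) * h τ‖ := by
        rw [integral_of_le hT, integral_Ioc_eq_integral_Ioo, norm_eq_abs]
    _ ≤ ∫ τ in Ioo 0 T, k (T - τ) * M := by
        refine norm_integral_le_of_norm_le (hk_refl.mul_const M) ?_
        filter_upwards [hh, ae_restrict_mem measurableSet_Ioo] with τ hτ hτ_mem
        have hkτ : 0 ≤ k (T - τ) :=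
          hk_nonneg _ ⟨sub_pos.2 hτ_mem.2, sub_lt_self T hτ_mem.1⟩
        rw [norm_mul, norm_of_nonneg hkτ]
        exact mul_le_mul_of_nonneg_left hτ hkτ
    _ = (∫ τ in (0 : ℝ)..T, k (T - τ)) * M := by
        rw [MeasureTheory.integral_mul_const, integral_of_le hT, integral_Ioc_eq_integral_Ioo]
    _ = (∫ s in (0 : ℝ)..T, k s) * M := by simp

end

theorem integral_decay_bound (α T M lam : ℝ) (hα0 : 0 < α) (hα1 : α ≤ 1)
    (hT : 0 < T) (hlam : 0 < lam)
    (h : ℝ → ℝ) (hmeas : Measurable h)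
    (hbdd : ∀ᵐ τ ∂(volume.restrict (Set.Ioo 0 T)), |h τ| ≤ M) :
    |∫ τ in (0:ℝ)..T,
        (T - τ) ^ (α - 1) * mittagLeffler α α (-lam * (T - τ) ^ α) * h τ|
      ≤ M / lam := by
  have hM : 0 ≤ M := by
    have : (ae (volume.restrict (Set.Ioo 0 T))).NeBot := ae_restrict_neBot.2 (by simp [hT])
    obtain ⟨τ, hτ⟩ := hbdd.exists
    exact (abs_nonneg _).trans hτ
  calc |∫ τ in (0:ℝ)..T, mittagLefflerKernel α α (-lam) (T - τ) * h τ|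
      ≤ (∫ s in (0:ℝ)..T, mittagLefflerKernel α α (-lam) s) * M :=
        abs_integral_comp_sub_mul_le hT.le (intervalIntegrable_mittagLefflerKernel hα0 hα0 _ _ _)
          (fun _ hs => (mittagLefflerKernel_pos hα0 hα1 hlam.le hs.1).le) hbdd
    _ ≤ 1 / lam * M := by
        gcongr
        exact integral_mittagLefflerKernel_le hα0 hα1 hlam hT
    _ = M / lam := by ring
end
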